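/- arXiv:2302.11946 — 3 statements merged into one kernel-verified Lean document; each statement's English description precedes it below -/
import Mathlib

section
/- There exists a constant C > 0, depending only on d, a, μ⁻ and μ⁺, such that every time-periodic solution β ∈ L²(𝕋^{d+1}) ∩ H¹((0,1); L²(𝕋^d)) of ∂_s β − A(s)β = θ with ∫_{𝕋^{d+1}} β dξ ds = 0 satisfies ‖β‖_{L^∞(0,1; L²(𝕋^d))} ≤ C ‖θ‖_{L²(𝕋^{d+1})}. -/
open MeasureTheory

noncomputable section

/-- The periodicity cell `[0,1)^d`, identified with the torus `𝕋^d`. -/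
def cube (d : ℕ) : Set (Fin d → ℝ) := Set.univ.pi fun _ => Set.Ico (0 : ℝ) 1

/-- The operator `A(s)` applied pointwise. -/
def Aop {d : ℕ} (a : (Fin d → ℝ) → ℝ) (μ : (Fin d → ℝ) → (Fin d → ℝ) → ℝ → ℝ)
    (s : ℝ) (v : (Fin d → ℝ) → ℝ) (ξ : Fin d → ℝ) : ℝ :=
  ∫ η, a (ξ - η) * μ ξ η s * (v η - v ξ)

/-- `β` is a time-periodic solution, in `L²(𝕋^{d+1}) ∩ H¹((0,1); L²(𝕋^d))`, of
`∂_s β - A(s)β = θ` (in the equivalent integrated-in-time formulation). -/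
def IsCellSol {d : ℕ} (a : (Fin d → ℝ) → ℝ) (μ : (Fin d → ℝ) → (Fin d → ℝ) → ℝ → ℝ)
    (θ : (Fin d → ℝ) → ℝ → ℝ) (β : (Fin d → ℝ) → ℝ → ℝ) : Prop :=
  Measurable (fun p : (Fin d → ℝ) × ℝ => β p.1 p.2) ∧
  (∀ ξ s, ∀ k : Fin d → ℤ, β (ξ + fun i => (k i : ℝ)) s = β ξ s) ∧
  (∀ ξ s, β ξ (s + 1) = β ξ s) ∧
  IntegrableOn (fun p : (Fin d → ℝ) × ℝ => (β p.1 p.2) ^ 2)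
    (cube d ×ˢ Set.Ioo (0 : ℝ) 1) ∧
  (∀ᵐ ξ ∂(volume : Measure (Fin d → ℝ)), ∀ s ∈ Set.Icc (0 : ℝ) 1,
    β ξ s = β ξ 0 + ∫ τ in (0 : ℝ)..s, (Aop a μ τ (fun η => β η τ) ξ + θ ξ τ))


namespace CellAux

open Set Filter Topology
open scoped ENNReal Pointwise

def Per {d : ℕ} {X : Type*} (f : (Fin d → ℝ) → X) : Prop :=
  ∀ ξ, ∀ k : Fin d → ℤ, f (ξ + fun i => (k i : ℝ)) = f ξ

lemma cube_fd (d : ℕ) : IsAddFundamentalDomain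
    (Submodule.span ℤ (Set.range (Pi.basisFun ℝ (Fin d)))).toAddSubgroup (cube d) volume := by
  have := ZSpan.isAddFundamentalDomain' (Pi.basisFun ℝ (Fin d)) volume
  rwa [ZSpan.fundamentalDomain_pi_basisFun] at this

lemma span_int {d : ℕ} {x : Fin d → ℝ}
    (hx : x ∈ Submodule.span ℤ (Set.range (Pi.basisFun ℝ (Fin d)))) :
    ∃ k : Fin d → ℤ, x = fun i => (k i : ℝ) := by
  rw [(Pi.basisFun ℝ (Fin d)).mem_span_iff_repr_mem ℤ] at hx
  choose k hk using hx
  refine ⟨k, funext fun i => ?_⟩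
  have := hk i
  simpa using this.symm

lemma measurableSet_cube (d : ℕ) : MeasurableSet (cube d) :=
  MeasurableSet.univ_pi fun _ => measurableSet_Ico

lemma volume_cube (d : ℕ) : volume (cube d) = 1 := by
  simp [cube, volume_pi, Measure.pi_pi]

instance (d : ℕ) : IsProbabilityMeasure ((volume : Measure (Fin d → ℝ)).restrict (cube d)) :=
  ⟨by simp [volume_cube]⟩

lemma per_vadd {d : ℕ} {X : Type*} {f : (Fin d → ℝ) → X} (hf : Per f)
    (g : (Submodule.span ℤ (Set.range (Pi.basisFun ℝ (Fin d)))).toAddSubgroup) (x : Fin d → ℝ) :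
    f (g +ᵥ x) = f x := by
  obtain ⟨k, hk⟩ := span_int g.2
  rw [AddSubgroup.vadd_def, vadd_eq_add, hk, add_comm, hf]

instance (d : ℕ) : Countable
    (Submodule.span ℤ (Set.range (Pi.basisFun ℝ (Fin d)))).toAddSubgroup :=
  inferInstanceAs (Countable (Submodule.span ℤ (Set.range (Pi.basisFun ℝ (Fin d)))))

lemma lint_shift {d : ℕ} {f : (Fin d → ℝ) → ℝ≥0∞} (hf : Per f) (z : Fin d → ℝ) :
    ∫⁻ ξ in cube d, f (ξ + z) = ∫⁻ ξ in cube d, f ξ := by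
  have h1 := (cube_fd d).vadd_of_comm z
  have hinv : VAddInvariantMeasure
    (Submodule.span ℤ (Set.range (Pi.basisFun ℝ (Fin d)))).toAddSubgroup (Fin d → ℝ) volume :=
      inferInstance
  rw [← h1.setLIntegral_eq (cube_fd d) f (per_vadd hf)]
  have := (measurePreserving_add_right (volume : Measure (Fin d → ℝ)) z).setLIntegral_comp_emb
    (measurableEmbedding_addRight z) f (cube d)
  rw [this]
  congr 2
  ext x
  constructor <;> rintro ⟨y, hy, rfl⟩ <;> exact ⟨y, hy, add_comm _ _⟩

lemma int_shift {d : ℕ} {f : (Fin d → ℝ) → ℝ} (hf : Per f) (z : Fin d → ℝ) :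
    ∫ ξ in cube d, f (ξ + z) = ∫ ξ in cube d, f ξ := by
  have h1 := (cube_fd d).vadd_of_comm z
  rw [← h1.setIntegral_eq (cube_fd d) (per_vadd hf)]
  have := (measurePreserving_add_right (volume : Measure (Fin d → ℝ)) z).setIntegral_preimage_emb
    (measurableEmbedding_addRight z) f (z +ᵥ cube d)
  rw [← this]
  congr 2
  ext x
  simp [Set.mem_vadd_set_iff_neg_vadd_mem, add_comm]

/-- squared `L²` modulus of continuity -/
def D {d : ℕ} (v : (Fin d → ℝ) → ℝ) (z : Fin d → ℝ) : ℝ≥0∞ :=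
  ∫⁻ ξ in cube d, ENNReal.ofReal ((v (ξ + z) - v ξ) ^ 2)

lemma per_shift {d : ℕ} {X : Type*} {f : (Fin d → ℝ) → X} (hf : Per f) (z : Fin d → ℝ) :
    Per (fun ξ => f (ξ + z)) := by
  intro ξ k
  show f _ = f _
  rw [add_right_comm, hf]

lemma D_meas {d : ℕ} {v : (Fin d → ℝ) → ℝ} (hv : Measurable v) : Measurable (D v) := by
  unfold D
  apply Measurable.lintegral_prod_right' (f := fun p : (Fin d → ℝ) × (Fin d → ℝ) => 
    ENNReal.ofReal ((v (p.2 + p.1) - v p.2) ^ 2))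
  fun_prop

lemma D_neg {d : ℕ} {v : (Fin d → ℝ) → ℝ} (hp : Per v) (z : Fin d → ℝ) : D v (-z) = D v z := by
  unfold D
  have hP : Per (fun ξ => ENNReal.ofReal ((v (ξ + -z) - v ξ) ^ 2)) := by
    intro ξ k
    have := per_shift hp (-z) ξ k
    simp only at this ⊢
    rw [this, hp]
  rw [← lint_shift hP z]
  congr 1; ext ξ; simp only [add_neg_cancel_right]
  congr 1; ring

lemma D_tri {d : ℕ} {v : (Fin d → ℝ) → ℝ} (hv : Measurable v) (hp : Per v) (y z : Fin d → ℝ) :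
    D v (y + z) ≤ 2 * D v y + 2 * D v z := by
  have hP : Per (fun ξ => ENNReal.ofReal ((v (ξ + y) - v ξ) ^ 2)) := by
    intro ξ k
    have := per_shift hp y ξ k
    simp only at this ⊢
    rw [this, hp]
  have h1 : D v y = ∫⁻ ξ in cube d, ENNReal.ofReal ((v (ξ + z + y) - v (ξ + z)) ^ 2) :=
    (lint_shift hP z).symm
  rw [h1]
  unfold D
  rw [← lintegral_const_mul _ (by fun_prop), ← lintegral_const_mul _ (by fun_prop),
    ← lintegral_add_left (by fun_prop)]
  apply lintegral_mono
  intro ξ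
  simp only
  have e : (2 : ℝ≥0∞) = ENNReal.ofReal 2 := by simp
  rw [e, ← ENNReal.ofReal_mul (by norm_num), ← ENNReal.ofReal_mul (by norm_num),
    ← ENNReal.ofReal_add (by positivity) (by positivity)]
  apply ENNReal.ofReal_le_ofReal
  rw [show ξ + (y + z) = ξ + z + y by abel]
  nlinarith [sq_nonneg ((v (ξ + z + y) - v (ξ + z)) - (v (ξ + z) - v ξ))]

lemma D_pow {d : ℕ} {v : (Fin d → ℝ) → ℝ} (hv : Measurable v) (hp : Per v) (z : Fin d → ℝ) (n : ℕ) :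
    D v ((2 : ℝ) ^ n • z) ≤ 4 ^ n * D v z := by
  induction n with
  | zero => simp
  | succ n ih =>
    have h2 : (2 : ℝ) ^ (n + 1) • z = (2 : ℝ) ^ n • z + (2 : ℝ) ^ n • z := by
      rw [← add_smul]; congr 1; ring
    rw [h2]
    calc _ ≤ 2 * D v ((2 : ℝ) ^ n • z) + 2 * D v ((2 : ℝ) ^ n • z) := D_tri hv hp _ _
      _ = 4 * D v ((2 : ℝ) ^ n • z) := by rw [← add_mul]; norm_num
      _ ≤ 4 * (4 ^ n * D v z) := by gcongr
      _ = _ := by rw [pow_succ]; ring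

lemma D_small {d : ℕ} (a : (Fin d → ℝ) → ℝ) (ha : Measurable a) (hn : ∀ z, 0 ≤ a z)
    (h1 : ∫ z, a z = 1) : ∃ Λ : ℝ≥0∞, Λ ≠ ⊤ ∧ ∀ᶠ y in 𝓝 (0 : Fin d → ℝ),
      ∀ v : (Fin d → ℝ) → ℝ, Measurable v → Per v →
        D v y ≤ Λ * ∫⁻ z, ENNReal.ofReal (a z) * D v z := by
  obtain ⟨ε, hε, hpos⟩ : ∃ ε : ℝ, 0 < ε ∧ 0 < volume {z | ε ≤ a z} := by
    by_contra! hcon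
    have : a =ᵐ[volume] 0 := by
      have : ∀ᵐ z, ∀ n : ℕ, ¬ (1 / ((n : ℝ) + 1) ≤ a z) := by
        rw [ae_all_iff]
        intro n
        have := hcon (1 / ((n : ℝ) + 1)) (by positivity)
        rw [ae_iff]
        simpa using this
      filter_upwards [this] with z hz
      by_contra hne
      have : 0 < a z := lt_of_le_of_ne (hn z) (Ne.symm hne)
      obtain ⟨n, hn⟩ := exists_nat_one_div_lt this
      exact hz n hn.le
    rw [integral_congr_ae this] at h1
    simp at h1
  obtain ⟨S, hS, hSc, hSpos⟩ := (measurableSet_le measurable_const ha :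
    MeasurableSet {z | ε ≤ a z}).exists_lt_isCompact hpos
  have hSfin : volume S ≠ ⊤ := hSc.measure_lt_top.ne
  have hlim := tendsto_measure_vadd_sdiff_isCompact_isClosed (μ := (volume : Measure (Fin d → ℝ)))
    hSc hSc.isClosed
  have hhalf : 0 < volume S / 2 := ENNReal.half_pos hSpos.ne'
  have hev := hlim.eventually (gt_mem_nhds hhalf)
  refine ⟨(volume S / 2)⁻¹ * (4 * (ENNReal.ofReal ε)⁻¹), ?_, ?_⟩
  · refine ENNReal.mul_ne_top (ENNReal.inv_ne_top.2 hhalf.ne') (ENNReal.mul_ne_top (by simp) ?_)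
    simpa using hε
  filter_upwards [hev] with y hy v hv hp
  have hSm := hSc.measurableSet
  have hI : volume S / 2 ≤ volume ((y +ᵥ S) ∩ S) := by
    have e1 : volume (y +ᵥ S) = volume S := measure_vadd _ _ _
    have e2 := measure_inter_add_sdiff (μ := volume) (y +ᵥ S) hSm
    rw [e1] at e2
    by_contra! hlt
    have := ENNReal.add_lt_add hlt hy
    rw [e2, ENNReal.add_halves] at this
    exact lt_irrefl _ this
  have hDm := D_meas hv
  -- E_S
  have hE : ENNReal.ofReal ε * ∫⁻ z in S, D v z ≤ ∫⁻ z, ENNReal.ofReal (a z) * D v z := by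
    rw [← lintegral_const_mul _ hDm]
    refine le_trans (setLIntegral_mono' hSm (fun z hz => ?_)) (setLIntegral_le_lintegral S _)
    gcongr
    exact hS hz
  have hmain : volume S / 2 * D v y ≤ 4 * ∫⁻ z in S, D v z := by
    calc volume S / 2 * D v y ≤ volume ((y +ᵥ S) ∩ S) * D v y := by gcongr
      _ = ∫⁻ z in (y +ᵥ S) ∩ S, D v y := by rw [lintegral_const, mul_comm]; simp
      _ ≤ ∫⁻ z in (y +ᵥ S) ∩ S, (2 * S.indicator (D v) z + 2 * S.indicator (D v) (z - y)) := by
        refine setLIntegral_mono' ((hSm.const_vadd y).inter hSm) (fun z hz => ?_)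
        have hz1 : z - y ∈ S := by
          have := hz.1
          rw [Set.mem_vadd_set_iff_neg_vadd_mem] at this
          simpa [sub_eq_neg_add] using this
        rw [Set.indicator_of_mem hz.2, Set.indicator_of_mem hz1]
        have := D_tri hv hp z (y - z)
        rw [← D_neg hp (y - z)] at this
        simpa using this
      _ ≤ ∫⁻ z, (2 * S.indicator (D v) z + 2 * S.indicator (D v) (z - y)) :=
        setLIntegral_le_lintegral _ _
      _ = 4 * ∫⁻ z in S, D v z := by
        have hm : Measurable (S.indicator (D v)) := hDm.indicator hSm
        rw [lintegral_add_left (by fun_prop), lintegral_const_mul _ hm,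
          lintegral_const_mul _ (by fun_prop), lintegral_sub_right_eq_self, lintegral_indicator hSm,
          ← add_mul]
        norm_num
  have hc1 : volume S / 2 ≠ ⊤ := ENNReal.div_ne_top hSfin (by simp)
  have hE0 : ENNReal.ofReal ε ≠ 0 := by simpa using hε
  calc D v y = (volume S / 2)⁻¹ * (volume S / 2 * D v y) := by
        rw [← mul_assoc, ENNReal.inv_mul_cancel hhalf.ne' hc1, one_mul]
    _ ≤ (volume S / 2)⁻¹ * (4 * ∫⁻ z in S, D v z) := by gcongr
    _ = (volume S / 2)⁻¹ * (4 * ((ENNReal.ofReal ε)⁻¹ * (ENNReal.ofReal ε * ∫⁻ z in S, D v z))) := by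
        rw [← mul_assoc (ENNReal.ofReal ε)⁻¹, ENNReal.inv_mul_cancel hE0 (by simp), one_mul]
    _ ≤ (volume S / 2)⁻¹ * (4 * ((ENNReal.ofReal ε)⁻¹ * ∫⁻ z, ENNReal.ofReal (a z) * D v z)) := by
        gcongr
    _ = _ := by ring

lemma D_cube {d : ℕ} (a : (Fin d → ℝ) → ℝ) (ha : Measurable a) (hn : ∀ z, 0 ≤ a z)
    (h1 : ∫ z, a z = 1) : ∃ Λ : ℝ≥0∞, Λ ≠ ⊤ ∧ ∀ y ∈ cube d,
      ∀ v : (Fin d → ℝ) → ℝ, Measurable v → Per v →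
        D v y ≤ Λ * ∫⁻ z, ENNReal.ofReal (a z) * D v z := by
  obtain ⟨Λ, hΛ, hev⟩ := D_small a ha hn h1
  obtain ⟨r, hr, hball⟩ := Metric.eventually_nhds_iff.1 hev
  obtain ⟨n, hn⟩ := pow_unbounded_of_one_lt (1 / r) (one_lt_two)
  refine ⟨4 ^ n * Λ, ENNReal.mul_ne_top (by simp) hΛ, fun y hy v hv hp => ?_⟩
  have hy1 : ‖y‖ ≤ 1 := by
    rw [pi_norm_le_iff_of_nonneg zero_le_one]
    intro i
    have := hy i (mem_univ i)
    rw [Real.norm_eq_abs, abs_le]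
    constructor <;> linarith [this.1, this.2]
  have h2 : (0 : ℝ) < 2 ^ n := by positivity
  have hs : D v (((2 : ℝ) ^ n)⁻¹ • y) ≤ Λ * ∫⁻ z, ENNReal.ofReal (a z) * D v z := by
    refine hball ?_ v hv hp
    rw [dist_zero_right, norm_smul, norm_inv, Real.norm_of_nonneg h2.le]
    calc ((2 : ℝ) ^ n)⁻¹ * ‖y‖ ≤ ((2 : ℝ) ^ n)⁻¹ * 1 := by gcongr
      _ < r := by
        rw [mul_one, inv_lt_comm₀ h2 hr]; simpa using hn
  have := D_pow hv hp (((2 : ℝ) ^ n)⁻¹ • y) n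
  rw [smul_inv_smul₀ h2.ne'] at this
  calc _ ≤ _ := this
    _ ≤ _ := by rw [mul_assoc]; gcongr

lemma var_le {Ω : Type*} [MeasurableSpace Ω] (P : Measure Ω) [IsProbabilityMeasure P] {v : Ω → ℝ}
    (hv : Integrable v P) (hv2 : Integrable (fun x => v x ^ 2) P) (c : ℝ) :
    ∫ x, v x ^ 2 ∂P - (∫ x, v x ∂P) ^ 2 ≤ ∫ x, (v x - c) ^ 2 ∂P := by
  have : ∫ x, (v x - c) ^ 2 ∂P = ∫ x, v x ^ 2 ∂P - 2 * c * (∫ x, v x ∂P) + c ^ 2 := by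
    have e : ∀ x, (v x - c) ^ 2 = v x ^ 2 - 2 * c * v x + c ^ 2 := fun x => by ring
    simp_rw [e]
    have hs : Integrable (fun x => v x ^ 2 - 2 * c * v x) P := hv2.sub (hv.const_mul _)
    rw [integral_add hs (integrable_const _), integral_sub hv2 (hv.const_mul _), integral_const_mul]
    simp
  rw [this]
  nlinarith [sq_nonneg (∫ x, v x ∂P - c)]

lemma poincare {d : ℕ} (a : (Fin d → ℝ) → ℝ) (ha : Measurable a) (hn : ∀ z, 0 ≤ a z)
    (h1 : ∫ z, a z = 1) : ∃ Λ : ℝ≥0∞, Λ ≠ ⊤ ∧ 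
      ∀ v : (Fin d → ℝ) → ℝ, Measurable v → Per v →
        Integrable (fun ξ => v ξ ^ 2) (volume.restrict (cube d)) →
        ENNReal.ofReal ((∫ ξ in cube d, v ξ ^ 2) - (∫ ξ in cube d, v ξ) ^ 2) ≤
          Λ * ∫⁻ z, ENNReal.ofReal (a z) * D v z := by
  obtain ⟨Λ, hΛ, hev⟩ := D_cube a ha hn h1
  refine ⟨Λ, hΛ, fun v hv hp hi => ?_⟩
  have hi1 : Integrable v (volume.restrict (cube d)) :=
    ((memLp_two_iff_integrable_sq hv.aestronglyMeasurable).2 hi).integrable (by norm_num)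
  calc _ = ∫⁻ ξ in cube d, ENNReal.ofReal 
            ((∫ ξ in cube d, v ξ ^ 2) - (∫ ξ in cube d, v ξ) ^ 2) := by
        rw [lintegral_const]; simp
    _ ≤ ∫⁻ ξ in cube d, ∫⁻ z in cube d, ENNReal.ofReal ((v z - v ξ) ^ 2) := by
        apply lintegral_mono
        intro ξ
        simp only
        rw [← ofReal_integral_eq_lintegral_ofReal]
        · exact ENNReal.ofReal_le_ofReal (var_le _ hi1 hi _)
        · have e : ∀ x, (v x - v ξ) ^ 2 = v x ^ 2 - 2 * v ξ * v x + v ξ ^ 2 := fun x => by ring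
          simp_rw [e]
          exact (hi.sub (hi1.const_mul _)).add (integrable_const _)
        · exact ae_of_all _ fun _ => sq_nonneg _
    _ = ∫⁻ ξ in cube d, ∫⁻ z in cube d, ENNReal.ofReal ((v (ξ + z) - v ξ) ^ 2) := by
        congr 1; ext ξ
        have hP : Per (fun z => ENNReal.ofReal ((v z - v ξ) ^ 2)) := by
          intro z k
          simp only
          rw [hp]
        rw [← lint_shift hP ξ]
        simp_rw [add_comm]
    _ = ∫⁻ z in cube d, D v z := by
        unfold D
        rw [lintegral_lintegral_swap]
        fun_prop
    _ ≤ ∫⁻ z in cube d, Λ * ∫⁻ z, ENNReal.ofReal (a z) * D v z :=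
        setLIntegral_mono' (measurableSet_cube d) (fun z hz => hev z hz v hv hp)
    _ = _ := by rw [lintegral_const]; simp


/-- kernel integrand in difference variables -/
def H {d : ℕ} (a : (Fin d → ℝ) → ℝ) (m : (Fin d → ℝ) → (Fin d → ℝ) → ℝ)
    (v : (Fin d → ℝ) → ℝ) (ξ z : Fin d → ℝ) : ℝ :=
  a z * m ξ (ξ + z) * (v (ξ + z) - v ξ)

lemma D_le {d : ℕ} {v : (Fin d → ℝ) → ℝ} (hv : Measurable v) (hp : Per v) (z : Fin d → ℝ) :
    D v z ≤ 4 * ∫⁻ ξ in cube d, ENNReal.ofReal (v ξ ^ 2) := by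
  have hP : Per (fun ξ => ENNReal.ofReal (v ξ ^ 2)) := by
    intro ξ k
    simp only
    rw [hp]
  have h4 : 4 * ∫⁻ ξ in cube d, ENNReal.ofReal (v ξ ^ 2) =
      2 * (∫⁻ ξ in cube d, ENNReal.ofReal (v (ξ + z) ^ 2)) +
        2 * ∫⁻ ξ in cube d, ENNReal.ofReal (v ξ ^ 2) := by
    rw [lint_shift hP z, ← add_mul]; norm_num
  rw [h4]
  unfold D
  rw [← lintegral_const_mul _ (by fun_prop), ← lintegral_const_mul _ (by fun_prop),
    ← lintegral_add_left (by fun_prop)]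
  apply lintegral_mono
  intro ξ
  simp only
  have e : (2 : ℝ≥0∞) = ENNReal.ofReal 2 := by simp
  rw [e, ← ENNReal.ofReal_mul (by norm_num), ← ENNReal.ofReal_mul (by norm_num),
    ← ENNReal.ofReal_add (by positivity) (by positivity)]
  apply ENNReal.ofReal_le_ofReal
  nlinarith [sq_nonneg (v (ξ + z) + v ξ)]

lemma op_lemma {d : ℕ} (a : (Fin d → ℝ) → ℝ) (ha : Measurable a) (hn : ∀ z, 0 ≤ a z)
    (hai : Integrable a) (h1 : ∫ z, a z = 1) (hs : ∀ z, a (-z) = a z)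
    (μm μp : ℝ) (hμm : 0 < μm)
    (m : (Fin d → ℝ) → (Fin d → ℝ) → ℝ)
    (hm : Measurable fun p : (Fin d → ℝ) × (Fin d → ℝ) => m p.1 p.2)
    (hm1 : ∀ ξ η, ∀ k : Fin d → ℤ, m (ξ + fun i => (k i : ℝ)) η = m ξ η)
    (hm2 : ∀ ξ η, ∀ k : Fin d → ℤ, m ξ (η + fun i => (k i : ℝ)) = m ξ η)
    (hms : ∀ ξ η, m ξ η = m η ξ) (hlo : ∀ ξ η, μm ≤ m ξ η) (hhi : ∀ ξ η, m ξ η ≤ μp)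
    (Λ : ℝ≥0∞) (hΛ : Λ ≠ ⊤)
    (v : (Fin d → ℝ) → ℝ) (hv : Measurable v) (hp : Per v)
    (hi : Integrable (fun ξ => v ξ ^ 2) (volume.restrict (cube d)))
    (hΛv : ENNReal.ofReal ((∫ ξ in cube d, v ξ ^ 2) - (∫ ξ in cube d, v ξ) ^ 2) ≤
          Λ * ∫⁻ z, ENNReal.ofReal (a z) * D v z)
    (w : (Fin d → ℝ) → ℝ) (hw : ∀ ξ, w ξ = ∫ η, a (ξ - η) * m ξ η * (v η - v ξ)) 
    (hwm : Measurable w) :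
    Integrable (fun ξ => w ξ ^ 2) (volume.restrict (cube d)) ∧
    (∫ ξ in cube d, w ξ ^ 2) ≤ 4 * μp ^ 2 * ∫ ξ in cube d, v ξ ^ 2 ∧
    (∫ ξ in cube d, w ξ) = 0 ∧
    (∫ ξ in cube d, w ξ * v ξ) ≤ - (μm / (2 * (Λ.toReal + 1))) * 
      ((∫ ξ in cube d, v ξ ^ 2) - (∫ ξ in cube d, v ξ) ^ 2) := by
  set P := (volume : Measure (Fin d → ℝ)).restrict (cube d) with hP
  have hi1 : Integrable v P :=
    ((memLp_two_iff_integrable_sq hv.aestronglyMeasurable).2 hi).integrable (by norm_num)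
  have hμp : 0 < μp := hμm.trans_le ((hlo 0 0).trans (hhi 0 0))
  have hmpos : ∀ ξ η, 0 < m ξ η := fun ξ η => hμm.trans_le (hlo ξ η)
  have hwH : ∀ ξ, w ξ = ∫ z, H a m v ξ z := by
    intro ξ
    rw [hw, ← integral_add_left_eq_self _ ξ]
    congr 1; ext z
    simp only [H]
    rw [show ξ - (ξ + z) = -z by abel, hs]
  have hmm : Measurable fun p : (Fin d → ℝ) × (Fin d → ℝ) => m p.1 (p.1 + p.2) :=
    hm.comp (measurable_fst.prodMk (measurable_fst.add measurable_snd))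
  have hHm : Measurable fun p : (Fin d → ℝ) × (Fin d → ℝ) => H a m v p.1 p.2 := by
    unfold H
    fun_prop
  -- the quadratic integrand
  set F : (Fin d → ℝ) × (Fin d → ℝ) → ℝ := fun p => a p.2 * (v (p.1 + p.2) - v p.1) ^ 2 with hF
  have hFm : Measurable F := by fun_prop
  have hFn : ∀ p, 0 ≤ F p := fun p => mul_nonneg (hn _) (sq_nonneg _)
  have hFl : ∫⁻ p, ENNReal.ofReal (F p) ∂(P.prod volume) =
      ∫⁻ z, ENNReal.ofReal (a z) * D v z := by
    rw [lintegral_prod_symm' _ (by fun_prop)]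
    congr 1; ext z
    unfold D
    rw [← lintegral_const_mul _ (by fun_prop)]
    congr 1; ext ξ
    rw [← ENNReal.ofReal_mul (hn z)]
  have hv2 : ENNReal.ofReal (∫ ξ, v ξ ^ 2 ∂P) = ∫⁻ ξ, ENNReal.ofReal (v ξ ^ 2) ∂P :=
    ofReal_integral_eq_lintegral_ofReal hi (ae_of_all _ fun _ => sq_nonneg _)
  have hV0 : 0 ≤ ∫ ξ, v ξ ^ 2 ∂P := integral_nonneg fun _ => sq_nonneg _
  have hFle : ∫⁻ z, ENNReal.ofReal (a z) * D v z ≤ ENNReal.ofReal (4 * ∫ ξ, v ξ ^ 2 ∂P) := by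
    calc _ ≤ ∫⁻ z, ENNReal.ofReal (a z) * ENNReal.ofReal (4 * ∫ ξ, v ξ ^ 2 ∂P) := by
          apply lintegral_mono
          intro z
          simp only
          gcongr
          rw [ENNReal.ofReal_mul (by norm_num), hv2]
          simpa using D_le hv hp z
      _ = _ := by
          rw [lintegral_mul_const _ (by fun_prop), ← ofReal_integral_eq_lintegral_ofReal hai
            (ae_of_all _ hn), h1]
          simp
  have hFi : Integrable F (P.prod volume) := by
    refine ⟨hFm.aestronglyMeasurable, ?_⟩
    rw [hasFiniteIntegral_iff_ofReal (ae_of_all _ hFn), hFl]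
    exact hFle.trans_lt ENNReal.ofReal_lt_top
  have hFint : ENNReal.ofReal (∫ p, F p ∂(P.prod volume)) = ∫⁻ z, ENNReal.ofReal (a z) * D v z := by
    rw [ofReal_integral_eq_lintegral_ofReal hFi (ae_of_all _ hFn), hFl]
  have hF0 : 0 ≤ ∫ p, F p ∂(P.prod volume) := integral_nonneg hFn
  have hF4 : ∫ p, F p ∂(P.prod volume) ≤ 4 * ∫ ξ, v ξ ^ 2 ∂P := by
    rw [← hFint] at hFle
    exact (ENNReal.ofReal_le_ofReal_iff (by positivity)).1 hFle
  have hA1 : Integrable (fun p : (Fin d → ℝ) × (Fin d → ℝ) => a p.2) (P.prod volume) := by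
    simpa using (integrable_const (1 : ℝ) (μ := P)).mul_prod hai
  have hAv : Integrable (fun p : (Fin d → ℝ) × (Fin d → ℝ) => v p.1 ^ 2 * a p.2)
      (P.prod volume) := hi.mul_prod hai
  have hHi : Integrable (fun p : (Fin d → ℝ) × (Fin d → ℝ) => H a m v p.1 p.2)
      (P.prod volume) := by
    refine ((hA1.add hFi).const_mul μp).mono' hHm.aestronglyMeasurable (ae_of_all _ fun p => ?_)
    simp only [H, hF, Pi.add_apply]
    rw [norm_mul, norm_mul, Real.norm_of_nonneg (hn _), Real.norm_of_nonneg (hmpos _ _).le,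
      Real.norm_eq_abs]
    set δ := v (p.1 + p.2) - v p.1
    have e1 : |δ| ≤ 1 + δ ^ 2 := by
      rw [← sq_abs]; nlinarith [sq_nonneg (|δ| - 1)]
    calc a p.2 * m p.1 (p.1 + p.2) * |δ| ≤ a p.2 * μp * (1 + δ ^ 2) := by
          have := hn p.2
          have := hhi p.1 (p.1 + p.2)
          gcongr
      _ = _ := by ring
  have hHv : Integrable (fun p : (Fin d → ℝ) × (Fin d → ℝ) => H a m v p.1 p.2 * v p.1)
      (P.prod volume) := by
    refine ((hAv.add hFi).const_mul μp).mono' (by fun_prop) (ae_of_all _ fun p => ?_)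
    simp only [H, hF, Pi.add_apply]
    rw [norm_mul, norm_mul, norm_mul, Real.norm_of_nonneg (hn _),
      Real.norm_of_nonneg (hmpos _ _).le, Real.norm_eq_abs, Real.norm_eq_abs]
    set δ := v (p.1 + p.2) - v p.1
    have e1 : |δ| * |v p.1| ≤ v p.1 ^ 2 + δ ^ 2 := by
      rw [← sq_abs, ← sq_abs δ]; nlinarith [sq_nonneg (|δ| - |v p.1|), sq_nonneg (|δ|), sq_nonneg (|v p.1|)]
    calc a p.2 * m p.1 (p.1 + p.2) * |δ| * |v p.1| 
        = a p.2 * m p.1 (p.1 + p.2) * (|δ| * |v p.1|) := by ring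
      _ ≤ a p.2 * μp * (v p.1 ^ 2 + δ ^ 2) := by
          have := hn p.2
          have := hhi p.1 (p.1 + p.2)
          gcongr
      _ = _ := by ring
  -- quadratic form
  have hHδ : Integrable (fun p : (Fin d → ℝ) × (Fin d → ℝ) =>
      H a m v p.1 p.2 * (v (p.1 + p.2) - v p.1)) (P.prod volume) := by
    refine (hFi.const_mul μp).mono' (by fun_prop) (ae_of_all _ fun p => ?_)
    have e : H a m v p.1 p.2 * (v (p.1 + p.2) - v p.1) = m p.1 (p.1 + p.2) * F p := by
      simp only [H, hF]; ring
    rw [e, norm_mul, Real.norm_of_nonneg (hFn _), Real.norm_of_nonneg (hmpos _ _).le]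
    exact mul_le_mul_of_nonneg_right (hhi _ _) (hFn _)
  have hHsh : ∀ z ξ, H a m v (ξ + z) (-z) = - H a m v ξ z := by
    intro z ξ
    simp only [H, hs, add_neg_cancel_right]
    rw [hms (ξ + z) ξ]; ring
  have hHper : ∀ z, Per (fun ξ => H a m v ξ z) := by
    intro z ξ k
    simp only [H]
    rw [add_right_comm, hm1, hm2, hp, hp]
  have hw1 : ∀ᵐ ξ ∂P, w ξ ^ 2 ≤ μp ^ 2 * ∫ z, F (ξ, z) := by
    filter_upwards [hHi.prod_right_ae, hFi.prod_right_ae] with ξ hξ1 hξ2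
    have key : ∫ z, 2 * w ξ * H a m v ξ z ≤ ∫ z, (w ξ ^ 2 * a z + μp ^ 2 * F (ξ, z)) := by
      refine integral_mono (hξ1.const_mul _) ((hai.const_mul _).add (hξ2.const_mul _)) fun z => ?_
      simp only [H, hF]
      set δ := v (ξ + z) - v ξ
      have e1 : 2 * w ξ * (m ξ (ξ + z) * δ) ≤ w ξ ^ 2 + μp ^ 2 * δ ^ 2 := by
        have : m ξ (ξ + z) ^ 2 ≤ μp ^ 2 := pow_le_pow_left₀ (hmpos _ _).le (hhi _ _) 2
        nlinarith [sq_nonneg (w ξ - m ξ (ξ + z) * δ), mul_le_mul_of_nonneg_right this (sq_nonneg δ)]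
      nlinarith [mul_le_mul_of_nonneg_left e1 (hn z)]
    rw [integral_const_mul, ← hwH, integral_add (hai.const_mul _) (hξ2.const_mul _),
      integral_const_mul, integral_const_mul, h1] at key
    linarith
  have hFP : Integrable (fun ξ => ∫ z, F (ξ, z)) P := hFi.integral_prod_left
  have hwi : Integrable (fun ξ => w ξ ^ 2) P := by
    refine (hFP.const_mul (μp ^ 2)).mono' (by fun_prop) ?_
    filter_upwards [hw1] with ξ hξ
    rwa [Real.norm_of_nonneg (sq_nonneg _)]
  refine ⟨hwi, ?_, ?_, ?_⟩
  · calc (∫ ξ, w ξ ^ 2 ∂P) ≤ ∫ ξ, (μp ^ 2 * ∫ z, F (ξ, z)) ∂P :=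
          integral_mono_ae hwi (hFP.const_mul _) hw1
      _ = μp ^ 2 * ∫ p, F p ∂(P.prod volume) := by
          rw [integral_const_mul, integral_prod _ hFi]
      _ ≤ μp ^ 2 * (4 * ∫ ξ, v ξ ^ 2 ∂P) := by gcongr
      _ = _ := by ring
  · have e1 : ∫ ξ, w ξ ∂P = ∫ z, ∫ ξ, H a m v ξ z ∂P := by
      simp_rw [hwH]
      exact integral_integral_swap hHi
    have e2 : ∫ z, ∫ ξ, H a m v ξ z ∂P = - ∫ z, ∫ ξ, H a m v ξ z ∂P := by
      conv_lhs => rw [← integral_neg_eq_self]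
      rw [← integral_neg]
      congr 1; ext z
      rw [← integral_neg, hP, ← int_shift (hHper (-z)) z]
      simp_rw [hHsh]
    rw [e1]; linarith
  · have e1 : ∫ ξ, w ξ * v ξ ∂P = ∫ z, ∫ ξ, H a m v ξ z * v ξ ∂P := by
      simp_rw [hwH, ← integral_mul_const]
      exact integral_integral_swap hHv
    have hvp : ∀ z, Per (fun ξ => H a m v ξ z * v ξ) := by
      intro z ξ k
      have := hHper z ξ k
      simp only at this ⊢
      rw [this, hp]
    have e2 : ∫ z, ∫ ξ, H a m v ξ z * v ξ ∂P = - ∫ z, ∫ ξ, H a m v ξ z * v (ξ + z) ∂P := by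
      conv_lhs => rw [← integral_neg_eq_self]
      rw [← integral_neg]
      congr 1; ext z
      rw [← integral_neg, hP, ← int_shift (hvp (-z)) z]
      simp_rw [hHsh, neg_mul]
    have hHvz : Integrable (fun p : (Fin d → ℝ) × (Fin d → ℝ) => H a m v p.1 p.2 * v (p.1 + p.2))
        (P.prod volume) := by
      refine (hHδ.add hHv).congr (ae_of_all _ fun p => ?_)
      simp only [Pi.add_apply]; ring
    have f1 : ∫ z, ∫ ξ, H a m v ξ z * v ξ ∂P = 
        ∫ p, H a m v p.1 p.2 * v p.1 ∂(P.prod volume) := 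
      (integral_prod_symm _ hHv).symm
    have f2 : ∫ z, ∫ ξ, H a m v ξ z * v (ξ + z) ∂P = 
        ∫ p, H a m v p.1 p.2 * v (p.1 + p.2) ∂(P.prod volume) := 
      (integral_prod_symm _ hHvz).symm
    have e3 : ∫ p, H a m v p.1 p.2 * v (p.1 + p.2) ∂(P.prod volume) -
        ∫ p, H a m v p.1 p.2 * v p.1 ∂(P.prod volume) =
        ∫ p, H a m v p.1 p.2 * (v (p.1 + p.2) - v p.1) ∂(P.prod volume) := by
      rw [← integral_sub hHvz hHv]
      congr 1; ext p; ring
    have e4 : μm * ∫ p, F p ∂(P.prod volume) ≤ 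
        ∫ p, H a m v p.1 p.2 * (v (p.1 + p.2) - v p.1) ∂(P.prod volume) := by
      rw [← integral_const_mul]
      refine integral_mono (hFi.const_mul _) hHδ fun p => ?_
      have e : H a m v p.1 p.2 * (v (p.1 + p.2) - v p.1) = m p.1 (p.1 + p.2) * F p := by
        simp only [H, hF]; ring
      simp only [e]
      exact mul_le_mul_of_nonneg_right (hlo _ _) (hFn _)
    have e5 : (∫ ξ, v ξ ^ 2 ∂P) - (∫ ξ, v ξ ∂P) ^ 2 ≤ Λ.toReal * ∫ p, F p ∂(P.prod volume) := by
      rw [← hFint, ← ENNReal.ofReal_toReal hΛ, ← ENNReal.ofReal_mul ENNReal.toReal_nonneg] at hΛv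
      exact (ENNReal.ofReal_le_ofReal_iff (by positivity)).1 hΛv
    have hL : 0 ≤ Λ.toReal := ENNReal.toReal_nonneg
    have e6 : μm / (2 * (Λ.toReal + 1)) * ((∫ ξ, v ξ ^ 2 ∂P) - (∫ ξ, v ξ ∂P) ^ 2) ≤
        μm / 2 * ∫ p, F p ∂(P.prod volume) := by
      calc _ ≤ μm / (2 * (Λ.toReal + 1)) * ((Λ.toReal + 1) * ∫ p, F p ∂(P.prod volume)) := by
            gcongr
            linarith
        _ = _ := by field_simp
    rw [neg_mul, e1]
    linarith


lemma sq_ftc {f g : ℝ → ℝ} (hg : IntervalIntegrable g volume 0 1)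
    (hf : ∀ s ∈ Icc (0 : ℝ) 1, f s = f 0 + ∫ τ in (0 : ℝ)..s, g τ) :
    ∀ s ∈ Icc (0 : ℝ) 1, f s ^ 2 = f 0 ^ 2 + ∫ τ in (0 : ℝ)..s, 2 * (f τ * g τ) := by
  intro s hs
  have hgs : IntervalIntegrable g volume 0 s := hg.mono_set (by
    rw [uIcc_of_le hs.1, uIcc_of_le zero_le_one]; exact Icc_subset_Icc_right hs.2)
  set K : ℝ → ℝ := fun x => ∫ τ in (0 : ℝ)..x, g τ with hK
  have hac : AbsolutelyContinuousOnInterval K 0 s :=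
    hgs.absolutelyContinuousOnInterval_intervalIntegral (by simp)
  have h1 := hac.integral_deriv_mul_eq_sub hac
  have hK0 : K 0 = 0 := by simp [hK]
  have h2 : ∫ x in (0 : ℝ)..s, (deriv K x * K x + K x * deriv K x) =
      ∫ x in (0 : ℝ)..s, 2 * (K x * g x) := by
    apply intervalIntegral.integral_congr_ae
    filter_upwards [hgs.ae_hasDerivAt_integral] with x hx hx3
    have := (hx (uIoc_subset_uIcc hx3) 0 (by simp)).deriv
    rw [this]; ring
  have hKc : ContinuousOn K (uIcc 0 s) := hac.continuousOn
  have h3 : ∫ τ in (0 : ℝ)..s, 2 * (f τ * g τ) =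
      ∫ τ in (0 : ℝ)..s, (2 * f 0 * g τ + 2 * (K τ * g τ)) := by
    apply intervalIntegral.integral_congr
    intro x hx
    rw [uIcc_of_le hs.1] at hx
    simp only
    rw [hf x ⟨hx.1, hx.2.trans hs.2⟩]
    ring
  rw [h3, intervalIntegral.integral_add (hgs.const_mul _)
    ((hgs.continuousOn_mul hKc).const_mul _), ← h2, h1, hK0,
    intervalIntegral.integral_const_mul, hf s hs]
  simp only [hK]
  ring

/-- unit time interval -/
abbrev T01 : Measure ℝ := volume.restrict (Ioc (0 : ℝ) 1)

instance : IsProbabilityMeasure T01 := ⟨by simp⟩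

lemma fub {X : Type*} [MeasurableSpace X] (P : Measure X) [IsProbabilityMeasure P]
    {φ : X → ℝ → ℝ} (hφ : Integrable (fun p : X × ℝ => φ p.1 p.2) (P.prod T01))
    {s : ℝ} (hs : s ∈ Icc (0 : ℝ) 1) :
    Integrable (fun ξ => ∫ τ in (0 : ℝ)..s, φ ξ τ) P ∧
    ∫ ξ, (∫ τ in (0 : ℝ)..s, φ ξ τ) ∂P = ∫ τ in (0 : ℝ)..s, ∫ ξ, φ ξ τ ∂P := by
  have hφs : Integrable (fun p : X × ℝ => φ p.1 p.2) (P.prod (volume.restrict (Ioc 0 s))) := by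
    rw [← Measure.restrict_univ (μ := P), Measure.prod_restrict] at hφ ⊢
    exact IntegrableOn.mono_set hφ (prod_mono subset_rfl (Ioc_subset_Ioc_right hs.2))
  simp_rw [intervalIntegral.integral_of_le hs.1]
  exact ⟨hφs.integral_prod_left, integral_integral_swap hφs⟩

lemma step {X : Type*} [MeasurableSpace X] (P : Measure X) [IsProbabilityMeasure P]
    {u φ : X → ℝ → ℝ} (hu : Integrable (fun p : X × ℝ => u p.1 p.2) (P.prod T01))
    (hφ : Integrable (fun p : X × ℝ => φ p.1 p.2) (P.prod T01))
    (h : ∀ᵐ ξ ∂P, ∀ s ∈ Icc (0 : ℝ) 1, u ξ s = u ξ 0 + ∫ τ in (0 : ℝ)..s, φ ξ τ) :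
    ∀ s ∈ Icc (0 : ℝ) 1, Integrable (fun ξ => u ξ s) P ∧
      ∫ ξ, u ξ s ∂P = ∫ ξ, u ξ 0 ∂P + ∫ τ in (0 : ℝ)..s, ∫ ξ, φ ξ τ ∂P := by
  have h0 : Integrable (fun ξ => u ξ 0) P := by
    have hae : ∀ᵐ τ ∂T01, Integrable (fun ξ => u ξ τ) P := hu.prod_left_ae
    obtain ⟨τ, hτ1, hτ2⟩ := (hae.and (ae_restrict_mem measurableSet_Ioc)).exists
    have hτ3 : τ ∈ Icc (0 : ℝ) 1 := ⟨hτ2.1.le, hτ2.2⟩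
    refine (hτ1.sub (fub P hφ hτ3).1).congr ?_
    filter_upwards [h] with ξ hξ
    simp only [Pi.sub_apply]
    rw [hξ τ hτ3]; ring
  intro s hs
  have hf := fub P hφ hs
  have he : (fun ξ => u ξ s) =ᵐ[P] fun ξ => u ξ 0 + ∫ τ in (0 : ℝ)..s, φ ξ τ := by
    filter_upwards [h] with ξ hξ using hξ s hs
  refine ⟨(h0.add hf.1).congr he.symm, ?_⟩
  rw [integral_congr_ae he, integral_add h0 hf.1, hf.2]

lemma time_lemma {X : Type*} [MeasurableSpace X] (P : Measure X) [IsProbabilityMeasure P]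
    (β G θ : X → ℝ → ℝ)
    (hβm : Measurable fun p : X × ℝ => β p.1 p.2) (hGm : Measurable fun p : X × ℝ => G p.1 p.2)
    (hθm : Measurable fun p : X × ℝ => θ p.1 p.2)
    (hβ2 : Integrable (fun p : X × ℝ => β p.1 p.2 ^ 2) (P.prod T01))
    (hG2 : Integrable (fun p : X × ℝ => G p.1 p.2 ^ 2) (P.prod T01))
    (hθ2 : Integrable (fun p : X × ℝ => θ p.1 p.2 ^ 2) (P.prod T01))
    (hsol : ∀ᵐ ξ ∂P, ∀ s ∈ Icc (0 : ℝ) 1,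
      β ξ s = β ξ 0 + ∫ τ in (0 : ℝ)..s, (G ξ τ + θ ξ τ))
    (hper : ∀ ξ, β ξ 1 = β ξ 0) {l : ℝ} (hl : 0 < l)
    (hG0 : ∀ᵐ τ ∂T01, ∫ ξ, G ξ τ ∂P = 0)
    (hGc : ∀ᵐ τ ∂T01, ∫ ξ, G ξ τ * β ξ τ ∂P ≤
      - l * ((∫ ξ, β ξ τ ^ 2 ∂P) - (∫ ξ, β ξ τ ∂P) ^ 2))
    (hmean : ∫ p, β (Prod.fst p) (Prod.snd p) ∂(P.prod T01) = 0) :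
    ∀ s ∈ Icc (0 : ℝ) 1, ∫ ξ, β ξ s ^ 2 ∂P ≤
      (2 * (2 + 1 / l ^ 2) + 1) * ∫ p, θ (Prod.fst p) (Prod.snd p) ^ 2 ∂(P.prod T01) := by
  have hβL := (memLp_two_iff_integrable_sq hβm.aestronglyMeasurable).2 hβ2
  have hGL := (memLp_two_iff_integrable_sq hGm.aestronglyMeasurable).2 hG2
  have hθL := (memLp_two_iff_integrable_sq hθm.aestronglyMeasurable).2 hθ2
  have hβi := hβL.integrable (by norm_num)
  have hGi := hGL.integrable (by norm_num)
  have hθi := hθL.integrable (by norm_num)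
  have hgi : Integrable (fun p : X × ℝ => G p.1 p.2 + θ p.1 p.2) (P.prod T01) := hGi.add hθi
  have hGβ : Integrable (fun p : X × ℝ => G p.1 p.2 * β p.1 p.2) (P.prod T01) :=
    hGL.integrable_mul hβL
  have hθβ : Integrable (fun p : X × ℝ => θ p.1 p.2 * β p.1 p.2) (P.prod T01) :=
    hθL.integrable_mul hβL
  have hφ : Integrable (fun p : X × ℝ => 2 * (β p.1 p.2 * (G p.1 p.2 + θ p.1 p.2)))
      (P.prod T01) := by
    refine ((hGβ.add hθβ).const_mul 2).congr (ae_of_all _ fun p => ?_)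
    simp only [Pi.add_apply]; ring
  have hsol2 : ∀ᵐ ξ ∂P, ∀ s ∈ Icc (0 : ℝ) 1,
      β ξ s ^ 2 = β ξ 0 ^ 2 + ∫ τ in (0 : ℝ)..s, 2 * (β ξ τ * (G ξ τ + θ ξ τ)) := by
    filter_upwards [hsol, hgi.prod_right_ae] with ξ h1 h2
    exact sq_ftc ((intervalIntegrable_iff_integrableOn_Ioc_of_le zero_le_one).2 h2) h1
  have hY := step P (u := fun ξ s => β ξ s ^ 2)
    (φ := fun ξ τ => 2 * (β ξ τ * (G ξ τ + θ ξ τ))) hβ2 hφ hsol2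
  have hM := step P (u := β) (φ := fun ξ τ => G ξ τ + θ ξ τ) hβi hgi hsol
  set y : ℝ → ℝ := fun s => ∫ ξ, β ξ s ^ 2 ∂P with hy
  set m : ℝ → ℝ := fun s => ∫ ξ, β ξ s ∂P with hm
  set h : ℝ → ℝ := fun τ => ∫ ξ, 2 * (β ξ τ * (G ξ τ + θ ξ τ)) ∂P with hh
  set k : ℝ → ℝ := fun τ => ∫ ξ, (G ξ τ + θ ξ τ) ∂P with hk
  set r : ℝ → ℝ := fun τ => ∫ ξ, θ ξ τ * β ξ τ ∂P with hr
  set q : ℝ → ℝ := fun τ => ∫ ξ, |θ ξ τ * β ξ τ| ∂P with hq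
  set Y := ∫ p, β (Prod.fst p) (Prod.snd p) ^ 2 ∂(P.prod T01) with hYdef
  set Θ := ∫ p, θ (Prod.fst p) (Prod.snd p) ^ 2 ∂(P.prod T01) with hΘ
  set B := ∫ p, |θ (Prod.fst p) (Prod.snd p)| ∂(P.prod T01) with hB
  have hΘ0 : 0 ≤ Θ := integral_nonneg fun _ => sq_nonneg _
  have hB0 : 0 ≤ B := integral_nonneg fun _ => abs_nonneg _
  have hBΘ : B ^ 2 ≤ Θ := by
    have hab : MemLp (fun p : X × ℝ => |θ p.1 p.2|) 2 (P.prod T01) := hθL.abs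
    have h3 : 0 ≤ ∫ p, |θ (Prod.fst p) (Prod.snd p)| ^ 2 ∂(P.prod T01) -
        (∫ p, |θ (Prod.fst p) (Prod.snd p)| ∂(P.prod T01)) ^ 2 := by
      have := ProbabilityTheory.variance_nonneg (fun p : X × ℝ => |θ p.1 p.2|) (P.prod T01)
      rw [ProbabilityTheory.variance_eq_sub hab] at this
      exact this
    simp only [sq_abs] at h3
    linarith
  -- integrability in time
  have hyi : Integrable y T01 := hβ2.integral_prod_right
  have hmi : Integrable m T01 := hβi.integral_prod_right
  have hhi : Integrable h T01 := hφ.integral_prod_right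
  have hki : Integrable k T01 := hgi.integral_prod_right
  have hri : Integrable r T01 := hθβ.integral_prod_right
  have hqi : Integrable q T01 := hθβ.abs.integral_prod_right
  have hyY : ∫ τ, y τ ∂T01 = Y := (integral_prod_symm _ hβ2).symm
  have hm0 : ∫ τ, m τ ∂T01 = 0 := by rw [← hmean]; exact (integral_prod_symm _ hβi).symm
  have hrR : ∫ τ, r τ ∂T01 = ∫ p, θ (Prod.fst p) (Prod.snd p) * β (Prod.fst p) (Prod.snd p) ∂(P.prod T01) :=
    (integral_prod_symm _ hθβ).symm
  have hqR : ∫ τ, q τ ∂T01 = ∫ p, |θ (Prod.fst p) (Prod.snd p) * β (Prod.fst p) (Prod.snd p)| ∂(P.prod T01) :=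
    (integral_prod_symm _ hθβ.abs).symm
  have ii : ∀ {f : ℝ → ℝ}, Integrable f T01 → ∀ {s t : ℝ}, s ∈ Icc (0 : ℝ) 1 → t ∈ Icc (0 : ℝ) 1 →
      IntervalIntegrable f volume s t := by
    intro f hf s t hs ht
    refine ((intervalIntegrable_iff_integrableOn_Ioc_of_le zero_le_one).2 hf).mono_set ?_
    rw [uIcc_of_le zero_le_one]
    exact uIcc_subset_Icc hs ht
  have z01 : (0 : ℝ) ∈ Icc (0 : ℝ) 1 := by simp
  have o01 : (1 : ℝ) ∈ Icc (0 : ℝ) 1 := by simp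
  have full : ∀ f : ℝ → ℝ, ∫ τ in (0 : ℝ)..1, f τ = ∫ τ, f τ ∂T01 := fun f =>
    intervalIntegral.integral_of_le zero_le_one
  have hys : ∀ s ∈ Icc (0 : ℝ) 1, y s = y 0 + ∫ τ in (0 : ℝ)..s, h τ := fun s hs => (hY s hs).2
  have hms : ∀ s ∈ Icc (0 : ℝ) 1, m s = m 0 + ∫ τ in (0 : ℝ)..s, k τ := fun s hs => (hM s hs).2
  -- mean bound
  have hkB : ∫ τ, |k τ| ∂T01 ≤ B := by
    have e : B = ∫ τ, ∫ ξ, |θ ξ τ| ∂P ∂T01 := integral_prod_symm _ hθi.abs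
    rw [e]
    refine integral_mono_ae hki.abs hθi.abs.integral_prod_right ?_
    filter_upwards [hG0, hGi.prod_left_ae, hθi.prod_left_ae] with τ h1 h2 h3
    simp only [hk]
    rw [integral_add h2 h3, h1, zero_add]
    exact abs_integral_le_integral_abs
  have hmd : ∀ s ∈ Icc (0 : ℝ) 1, ∀ t ∈ Icc (0 : ℝ) 1, |m s - m t| ≤ B := by
    intro s hs t ht
    have e : m s - m t = ∫ τ in t..s, k τ := by
      rw [hms s hs, hms t ht, ← intervalIntegral.integral_interval_sub_left (ii hki z01 hs) (ii hki z01 ht)]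
      ring
    rw [e]
    refine le_trans ?_ hkB
    rw [← Real.norm_eq_abs]
    refine (intervalIntegral.norm_integral_le_integral_norm_uIoc).trans ?_
    refine setIntegral_mono_set hki.norm (ae_of_all _ fun _ => norm_nonneg _) ?_
    refine LE.le.eventuallyLE ?_
    exact Ioc_subset_Ioc (le_min ht.1 hs.1) (max_le ht.2 hs.2)
  have hmB : ∀ s ∈ Icc (0 : ℝ) 1, m s ^ 2 ≤ Θ := by
    intro s hs
    have e : m s = ∫ t, (m s - m t) ∂T01 := by
      rw [integral_sub (integrable_const _) hmi, hm0]; simp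
    have : |m s| ≤ B := by
      rw [e]
      refine abs_integral_le_integral_abs.trans ?_
      calc _ ≤ ∫ t, B ∂T01 := by
            refine integral_mono_ae ((integrable_const _).sub hmi).abs (integrable_const _) ?_
            filter_upwards [ae_restrict_mem measurableSet_Ioc] with t ht
            exact hmd s hs t ⟨ht.1.le, ht.2⟩
        _ = B := by simp
    calc m s ^ 2 = |m s| ^ 2 := (sq_abs _).symm
      _ ≤ B ^ 2 := by gcongr
      _ ≤ Θ := hBΘ
  have hjen : ∀ s ∈ Icc (0 : ℝ) 1, m s ^ 2 ≤ y s := by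
    intro s hs
    have h1 := (hM s hs).1
    have h2 := (hY s hs).1
    have hL : MemLp (fun ξ => β ξ s) 2 P := (memLp_two_iff_integrable_sq h1.1).2 h2
    have := ProbabilityTheory.variance_nonneg (fun ξ => β ξ s) P
    rw [ProbabilityTheory.variance_eq_sub hL] at this
    have h3 : 0 ≤ y s - m s ^ 2 := this
    linarith
  have hhle : ∀ᵐ τ ∂T01, h τ ≤ 2 * (- l * (y τ - m τ ^ 2)) + 2 * r τ := by
    filter_upwards [hGc, hGβ.prod_left_ae, hθβ.prod_left_ae] with τ h1 h2 h3
    have e : h τ = 2 * (∫ ξ, G ξ τ * β ξ τ ∂P) + 2 * r τ := by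
      simp only [hh, hr]
      rw [← mul_add, ← integral_add h2 h3, ← integral_const_mul]
      congr 1; ext ξ; ring
    rw [e]
    linarith
  have hh1 : ∀ᵐ τ ∂T01, h τ ≤ 2 * (- l * (y τ - Θ)) + 2 * r τ := by
    filter_upwards [hhle, ae_restrict_mem measurableSet_Ioc] with τ h1 h2
    have := hmB τ ⟨h2.1.le, h2.2⟩
    nlinarith
  have hh2 : ∀ᵐ τ ∂T01, 0 ≤ 2 * q τ - h τ := by
    filter_upwards [hhle, ae_restrict_mem measurableSet_Ioc] with τ h1 h2
    have := hjen τ ⟨h2.1.le, h2.2⟩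
    have h3 : r τ ≤ q τ := (le_abs_self _).trans abs_integral_le_integral_abs
    nlinarith
  have hy01 : y 1 = y 0 := by simp only [hy, hper]
  have hh0 : ∫ τ, h τ ∂T01 = 0 := by
    have := hys 1 o01
    rw [full] at this
    linarith
  have hYΘ : Y ≤ (2 + 1 / l ^ 2) * Θ := by
    have h1 : ∫ τ, h τ ∂T01 ≤ 2 * (- l * (Y - Θ)) + 2 * ∫ τ, r τ ∂T01 := by
      have i1 : Integrable (fun τ => 2 * (- l * (y τ - Θ))) T01 :=
        ((hyi.sub (integrable_const _)).const_mul _).const_mul _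
      refine (integral_mono_ae hhi (i1.add (hri.const_mul 2)) hh1).trans_eq ?_
      simp only [Pi.add_apply]
      rw [integral_add i1 (hri.const_mul 2), integral_const_mul, integral_const_mul,
        integral_const_mul, integral_sub hyi (integrable_const _), hyY]
      simp
    have h2 : ∫ τ, r τ ∂T01 ≤ (1 / (2 * l)) * Θ + l / 2 * Y := by
      rw [hrR, hΘ, hYdef, ← integral_const_mul, ← integral_const_mul,
        ← integral_add (hθ2.const_mul _) (hβ2.const_mul _)]
      refine integral_mono hθβ ((hθ2.const_mul _).add (hβ2.const_mul _)) fun p => ?_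
      simp only
      set x := θ p.1 p.2
      set z := β p.1 p.2
      have e : (1 / (2 * l)) * x ^ 2 + l / 2 * z ^ 2 - x * z = (1 / (2 * l)) * (x - l * z) ^ 2 := by
        field_simp; ring
      have : 0 ≤ (1 / (2 * l)) * (x - l * z) ^ 2 := by positivity
      linarith
    rw [hh0] at h1
    have h3 : l * Y ≤ 2 * l * Θ + 1 / l * Θ := by
      have : 2 * ((1 / (2 * l)) * Θ) = 1 / l * Θ := by field_simp
      nlinarith
    have h4 : l * Y ≤ l * ((2 + 1 / l ^ 2) * Θ) := by
      calc _ ≤ _ := h3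
        _ = _ := by field_simp
    exact le_of_mul_le_mul_left h4 hl
  have hqb : 2 * ∫ τ, q τ ∂T01 ≤ Θ + Y := by
    rw [hqR, hΘ, hYdef, ← integral_const_mul, ← integral_add hθ2 hβ2]
    refine integral_mono (hθβ.abs.const_mul _) (hθ2.add hβ2) fun p => ?_
    simp only
    rw [abs_mul, ← sq_abs (θ p.1 p.2), ← sq_abs (β p.1 p.2)]
    nlinarith [sq_nonneg (|θ p.1 p.2| - |β p.1 p.2|)]
  -- comparison of any two times
  have hq0 : ∀ τ, 0 ≤ 2 * q τ := fun τ =>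
    mul_nonneg zero_le_two (integral_nonneg fun _ => abs_nonneg _)
  have hSi : Integrable (fun τ => 2 * q τ - h τ) T01 := (hqi.const_mul 2).sub hhi
  have hSfull : ∫ τ in (0 : ℝ)..1, (2 * q τ - h τ) = 2 * ∫ τ, q τ ∂T01 := by
    rw [full, integral_sub (hqi.const_mul 2) hhi, hh0, integral_const_mul, sub_zero]
  have hQfull : ∫ τ in (0 : ℝ)..1, 2 * q τ = 2 * ∫ τ, q τ ∂T01 := by
    rw [full, integral_const_mul]
  have hcmp : ∀ s ∈ Icc (0 : ℝ) 1, ∀ t ∈ Icc (0 : ℝ) 1, y s ≤ y t + (Θ + Y) := by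
    intro s hs t ht
    have e : y s - y t = ∫ τ in t..s, h τ := by
      rw [hys s hs, hys t ht, ← intervalIntegral.integral_interval_sub_left (ii hhi z01 hs) (ii hhi z01 ht)]
      ring
    have e2 : ∫ τ in t..s, (2 * q τ - h τ) = (∫ τ in t..s, 2 * q τ) - ∫ τ in t..s, h τ :=
      intervalIntegral.integral_sub (ii (hqi.const_mul 2) ht hs) (ii hhi ht hs)
    rcases le_total t s with hts | hst
    · have a1 : 0 ≤ ∫ τ in t..s, (2 * q τ - h τ) := by
        refine intervalIntegral.integral_nonneg_of_ae_restrict hts ?_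
        refine ae_restrict_of_ae_restrict_of_subset ?_ ?_ (p := fun τ => 0 ≤ 2 * q τ - h τ) (t := Icc 0 1)
        · exact Icc_subset_Icc ht.1 hs.2
        · rw [← Measure.restrict_congr_set Ioc_ae_eq_Icc]; exact hh2
      have a2 : ∫ τ in t..s, 2 * q τ ≤ ∫ τ in (0 : ℝ)..1, 2 * q τ :=
        intervalIntegral.integral_mono_interval ht.1 hts hs.2 (ae_of_all _ hq0)
          (ii (hqi.const_mul 2) z01 o01)
      linarith
    · have a1 : 0 ≤ ∫ τ in s..t, 2 * q τ :=
        intervalIntegral.integral_nonneg_of_forall hst hq0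
      have a2 : ∫ τ in s..t, (2 * q τ - h τ) ≤ ∫ τ in (0 : ℝ)..1, (2 * q τ - h τ) :=
        intervalIntegral.integral_mono_interval hs.1 hst ht.2 hh2 (ii hSi z01 o01)
      rw [intervalIntegral.integral_symm s t] at e
      rw [intervalIntegral.integral_symm s t, intervalIntegral.integral_symm (f := fun τ => 2 * q τ) s t,
        intervalIntegral.integral_symm (f := h) s t] at e2
      linarith
  intro s hs
  have hfin : y s ≤ Y + (Θ + Y) := by
    calc y s = ∫ t, y s ∂T01 := by simp
      _ ≤ ∫ t, (y t + (Θ + Y)) ∂T01 := by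
          refine integral_mono_ae (integrable_const _) (hyi.add (integrable_const _)) ?_
          filter_upwards [ae_restrict_mem measurableSet_Ioc] with t ht
          exact hcmp s hs t ⟨ht.1.le, ht.2⟩
      _ = _ := by rw [integral_add hyi (integrable_const _), hyY]; simp
  show y s ≤ _
  nlinarith


end CellAux

/-- There is `C > 0`, depending only on `d`, `a`, `μ⁻`, `μ⁺`, such that every
time-periodic solution `β` of `∂_s β - A(s)β = θ` with zero mean over `𝕋^{d+1}`
satisfies `‖β‖_{L^∞(0,1;L²(𝕋^d))} ≤ C ‖θ‖_{L²(𝕋^{d+1})}`. -/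
theorem stmt10 {d : ℕ} (hd : 1 ≤ d)
    (a : (Fin d → ℝ) → ℝ) (μm μp : ℝ)
    (hameas : Measurable a) (hanonneg : ∀ z, 0 ≤ a z)
    (haint : Integrable a) (hamass : ∫ z, a z = 1)
    (hamom : Integrable (fun z => ‖z‖ ^ 2 * a z))
    (hasymm : ∀ z, a (-z) = a z)
    (hμm : 0 < μm) :
    ∃ C : ℝ, 0 < C ∧
      ∀ μ : (Fin d → ℝ) → (Fin d → ℝ) → ℝ → ℝ,
        (Measurable fun p : (Fin d → ℝ) × (Fin d → ℝ) × ℝ => μ p.1 p.2.1 p.2.2) →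
        (∀ ξ η s, ∀ k : Fin d → ℤ, μ (ξ + fun i => (k i : ℝ)) η s = μ ξ η s) →
        (∀ ξ η s, ∀ k : Fin d → ℤ, μ ξ (η + fun i => (k i : ℝ)) s = μ ξ η s) →
        (∀ ξ η s, μ ξ η (s + 1) = μ ξ η s) →
        (∀ ξ η s, μ ξ η s = μ η ξ s) →
        (∀ ξ η s, μm ≤ μ ξ η s) → (∀ ξ η s, μ ξ η s ≤ μp) →
        ∀ θ : (Fin d → ℝ) → ℝ → ℝ,
          (Measurable fun p : (Fin d → ℝ) × ℝ => θ p.1 p.2) →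
          (∀ ξ s, ∀ k : Fin d → ℤ, θ (ξ + fun i => (k i : ℝ)) s = θ ξ s) →
          (∀ ξ s, θ ξ (s + 1) = θ ξ s) →
          IntegrableOn (fun p : (Fin d → ℝ) × ℝ => (θ p.1 p.2) ^ 2)
            (cube d ×ˢ Set.Ioo (0 : ℝ) 1) →
          (∫ p in cube d ×ˢ Set.Ioo (0 : ℝ) 1, θ (Prod.fst p) (Prod.snd p)) = 0 →
          ∀ β, IsCellSol a μ θ β →
            (∫ p in cube d ×ˢ Set.Ioo (0 : ℝ) 1, β (Prod.fst p) (Prod.snd p)) = 0 →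
            ∀ᵐ s ∂(volume.restrict (Set.Ioo (0 : ℝ) 1)),
              Real.sqrt (∫ ξ in cube d, (β ξ s) ^ 2) ≤
                C * Real.sqrt (∫ p in cube d ×ˢ Set.Ioo (0 : ℝ) 1,
                  (θ (Prod.fst p) (Prod.snd p)) ^ 2) := by
  obtain ⟨Λ, hΛ, hpoin⟩ := CellAux.poincare a hameas hanonneg hamass
  have hΛ0 : 0 ≤ Λ.toReal := ENNReal.toReal_nonneg
  set l := μm / (2 * (Λ.toReal + 1)) with hl
  have hlpos : 0 < l := by positivity
  refine ⟨Real.sqrt (2 * (2 + 1 / l ^ 2) + 1), by positivity, ?_⟩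
  intro μ hμmeas hμ1 hμ2 _ hμs hlo hhi θ hθm _ _ hθ2 _ β hβ hβ0
  obtain ⟨hβm, hβp, hβt, hβ2, hsol⟩ := hβ
  set P := (volume : Measure (Fin d → ℝ)).restrict (cube d) with hP
  have hprod : (volume : Measure ((Fin d → ℝ) × ℝ)).restrict (cube d ×ˢ Set.Ioo (0 : ℝ) 1) =
      P.prod CellAux.T01 := by
    rw [Measure.volume_eq_prod, ← Measure.prod_restrict,
      Measure.restrict_congr_set (Ioo_ae_eq_Ioc (μ := (volume : Measure ℝ)))]
  unfold IntegrableOn at hβ2 hθ2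
  rw [hprod] at hβ2 hθ2 hβ0 ⊢
  set G : (Fin d → ℝ) → ℝ → ℝ := fun ξ τ => Aop a μ τ (fun η => β η τ) ξ with hG
  have hGm : Measurable fun p : (Fin d → ℝ) × ℝ => G p.1 p.2 := by
    have hjoint : Measurable fun p : ((Fin d → ℝ) × ℝ) × (Fin d → ℝ) =>
        a (p.1.1 - p.2) * μ p.1.1 p.2 p.1.2 * (β p.2 p.1.2 - β p.1.1 p.1.2) := by
      have h1 : Measurable fun p : ((Fin d → ℝ) × ℝ) × (Fin d → ℝ) => μ p.1.1 p.2 p.1.2 :=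
        hμmeas.comp (measurable_fst.fst.prodMk (measurable_snd.prodMk measurable_fst.snd))
      have h2 : Measurable fun p : ((Fin d → ℝ) × ℝ) × (Fin d → ℝ) => β p.2 p.1.2 :=
        hβm.comp (measurable_snd.prodMk measurable_fst.snd)
      have h3 : Measurable fun p : ((Fin d → ℝ) × ℝ) × (Fin d → ℝ) => β p.1.1 p.1.2 :=
        hβm.comp measurable_fst
      have h4 : Measurable fun p : ((Fin d → ℝ) × ℝ) × (Fin d → ℝ) => a (p.1.1 - p.2) :=
        hameas.comp (measurable_fst.fst.sub measurable_snd)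
      exact (h4.mul h1).mul (h2.sub h3)
    exact (hjoint.stronglyMeasurable.integral_prod_right' (ν := volume)).measurable
  have hop : ∀ᵐ τ ∂CellAux.T01,
      Integrable (fun ξ => G ξ τ ^ 2) P ∧
      (∫ ξ, G ξ τ ^ 2 ∂P) ≤ 4 * μp ^ 2 * ∫ ξ, β ξ τ ^ 2 ∂P ∧
      (∫ ξ, G ξ τ ∂P) = 0 ∧
      (∫ ξ, G ξ τ * β ξ τ ∂P) ≤ - l * ((∫ ξ, β ξ τ ^ 2 ∂P) - (∫ ξ, β ξ τ ∂P) ^ 2) := by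
    filter_upwards [hβ2.prod_left_ae] with τ hτ
    have hvm : Measurable fun ξ => β ξ τ := hβm.comp (measurable_id.prodMk measurable_const)
    have hvp : CellAux.Per fun ξ => β ξ τ := fun ξ k => hβp ξ τ k
    exact CellAux.op_lemma a hameas hanonneg haint hamass hasymm μm μp hμm
      (fun ξ η => μ ξ η τ)
      (hμmeas.comp (measurable_fst.prodMk (measurable_snd.prodMk measurable_const)))
      (fun ξ η k => hμ1 ξ η τ k) (fun ξ η k => hμ2 ξ η τ k) (fun ξ η => hμs ξ η τ)
      (fun ξ η => hlo ξ η τ) (fun ξ η => hhi ξ η τ) Λ hΛ (fun ξ => β ξ τ) hvm hvp hτ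
      (hpoin _ hvm hvp hτ) (fun ξ => G ξ τ) (fun ξ => rfl)
      (hGm.comp (measurable_id.prodMk measurable_const))
  have hG2 : Integrable (fun p : (Fin d → ℝ) × ℝ => G p.1 p.2 ^ 2) (P.prod CellAux.T01) := by
    rw [integrable_prod_iff' (hGm.pow_const 2).aestronglyMeasurable]
    refine ⟨hop.mono fun τ h => h.1, ?_⟩
    refine (hβ2.integral_prod_right.const_mul (4 * μp ^ 2)).mono' ?_ ?_
    · exact (hGm.pow_const 2).norm.stronglyMeasurable.integral_prod_left'.aestronglyMeasurable
    · filter_upwards [hop] with τ h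
      rw [Real.norm_of_nonneg (integral_nonneg fun _ => norm_nonneg _)]
      simpa [Real.norm_eq_abs, abs_of_nonneg, sq_nonneg] using h.2.1
  have key := CellAux.time_lemma P β G θ hβm hGm hθm hβ2 hG2 hθ2 (ae_restrict_of_ae hsol)
    (fun ξ => by simpa using hβt ξ 0) hlpos (hop.mono fun τ h => h.2.2.1)
    (hop.mono fun τ h => h.2.2.2) hβ0
  filter_upwards [ae_restrict_mem measurableSet_Ioo] with s hs
  rw [← Real.sqrt_mul (by positivity)]
  exact Real.sqrt_le_sqrt (key s ⟨hs.1.le, hs.2.le⟩)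
end
end

section
/- There exists a constant C₃ > 0, depending only on d, a, μ⁻ and μ⁺, such that every time-periodic solution β ∈ L²(𝕋^{d+1}) ∩ H¹((0,1); L²(𝕋^d)) of ∂_s β − A(s)β = θ with ∫_{𝕋^{d+1}} β dξ ds = 0 satisfies ‖β‖_{L²(𝕋^{d+1})} ≤ C₃ ‖θ‖_{L²(𝕋^{d+1})}. -/
open MeasureTheory

noncomputable section

theorem fract_mp (c : ℝ) : MeasurePreserving (fun x : ℝ => Int.fract (x + c))
    (volume.restrict (Set.Ico (0:ℝ) 1)) (volume.restrict (Set.Ico (0:ℝ) 1)) := by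
  have h1 := UnitAddCircle.measurePreserving_mk 0
  rw [zero_add] at h1
  have hr : (volume.restrict (Set.Ioc (0:ℝ) 1)) = volume.restrict (Set.Ico (0:ℝ) 1) :=
    Measure.restrict_congr_set Ico_ae_eq_Ioc.symm
  rw [hr] at h1
  let g : UnitAddCircle → ℝ := fun y => (AddCircle.equivIco (1:ℝ) 0 y : ℝ)
  have hgm : Measurable g :=
    measurable_subtype_coe.comp (AddCircle.measurableEquivIco (1:ℝ) 0).measurable
  have hg : ∀ x : ℝ, g (x : UnitAddCircle) = Int.fract x := by
    intro x
    have := AddCircle.coe_equivIco_mk_apply (p := (1:ℝ)) x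
    rw [div_one, mul_one] at this
    exact this
  have h2 : MeasurePreserving (fun y : UnitAddCircle => y + (c : UnitAddCircle)) :=
    measurePreserving_add_right _ _
  have h3 : MeasurePreserving g volume (volume.restrict (Set.Ico (0:ℝ) 1)) := by
    refine ⟨hgm, ?_⟩
    rw [← h1.map_eq, Measure.map_map hgm h1.measurable]
    conv_rhs => rw [← Measure.map_id (μ := volume.restrict (Set.Ico (0:ℝ) 1))]
    apply Measure.map_congr
    filter_upwards [ae_restrict_mem measurableSet_Ico] with x hx
    simp only [Function.comp, hg, id]
    exact Int.fract_eq_self.2 hx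
  have h4 := h3.comp (h2.comp h1)
  convert h4 using 1
  funext x
  simp only [Function.comp]
  rw [← hg]
  rfl

/-- coordinatewise fractional part -/
def frac {d : ℕ} (ξ : Fin d → ℝ) : Fin d → ℝ := fun i => Int.fract (ξ i)

/-- Lebesgue measure on the cell -/
def cubeM (d : ℕ) : Measure (Fin d → ℝ) := volume.restrict (cube d)

instance cubeM_prob (d : ℕ) : IsProbabilityMeasure (cubeM d) := by
  refine ⟨?_⟩
  simp [cubeM, cube, volume_pi_pi]

/-- Lebesgue measure on the time interval -/
def timeM : Measure ℝ := volume.restrict (Set.Ioo (0:ℝ) 1)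

instance timeM_prob : IsProbabilityMeasure timeM := by
  refine ⟨?_⟩
  simp [timeM]

/-- Lebesgue measure on the space-time cell -/
def cellM (d : ℕ) : Measure ((Fin d → ℝ) × ℝ) := (cubeM d).prod timeM

instance cellM_prob (d : ℕ) : IsProbabilityMeasure (cellM d) := by
  unfold cellM; infer_instance

theorem cellM_eq (d : ℕ) : cellM d = volume.restrict (cube d ×ˢ Set.Ioo (0:ℝ) 1) := by
  unfold cellM cubeM timeM
  rw [Measure.prod_restrict]; rfl

theorem frac_measurable {d : ℕ} : Measurable (frac (d := d)) := by
  unfold frac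
  exact measurable_pi_lambda _ fun i => (measurable_pi_apply i).fract

theorem frac_mp {d : ℕ} (z : Fin d → ℝ) :
    MeasurePreserving (fun ξ => frac (ξ + z)) (cubeM d) (cubeM d) := by
  have : cubeM d = Measure.pi fun _ : Fin d => (volume : Measure ℝ).restrict (Set.Ico 0 1) := by
    rw [cubeM, cube, volume_pi, Measure.restrict_pi_pi]
  rw [this]
  exact measurePreserving_pi _ _ (f := fun i (x : ℝ) => Int.fract (x + z i)) fun i => fract_mp (z i)

theorem per_frac {d : ℕ} {X : Type*} (F : (Fin d → ℝ) → X)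
    (h : ∀ ξ, ∀ k : Fin d → ℤ, F (ξ + fun i => (k i : ℝ)) = F ξ) (ξ : Fin d → ℝ) :
    F (frac ξ) = F ξ := by
  rw [← h (frac ξ) (fun i => ⌊ξ i⌋)]
  congr 1
  funext i
  simp [frac, Int.fract_add_floor]

/-- space-time translation -/
def sh {d : ℕ} (z : Fin d → ℝ) (p : (Fin d → ℝ) × ℝ) : (Fin d → ℝ) × ℝ := (frac (p.1 + z), p.2)

theorem sh_mp {d : ℕ} (z : Fin d → ℝ) : MeasurePreserving (sh z) (cellM d) (cellM d) :=
  (frac_mp z).prod (MeasurePreserving.id _)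

theorem sh_measurable {d : ℕ} : Measurable (fun q : (Fin d → ℝ) × ((Fin d → ℝ) × ℝ) => sh q.1 q.2) := by
  unfold sh
  exact (frac_measurable.comp (measurable_snd.fst.add measurable_fst)).prodMk measurable_snd.snd

/-- the skew product `(z, p) ↦ (z, p + z)` preserves `α ⊗ cellM`. -/
theorem skew_mp {d : ℕ} (α : Measure (Fin d → ℝ)) [IsProbabilityMeasure α] :
    MeasurePreserving (fun q : (Fin d → ℝ) × ((Fin d → ℝ) × ℝ) => (q.1, sh q.1 q.2))
      (α.prod (cellM d)) (α.prod (cellM d)) :=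
  (MeasurePreserving.id α).skew_product (g := fun z p => sh z p) sh_measurable
    (ae_of_all _ fun z => (sh_mp z).map_eq)

/-- `∫_0^1 u g = 0` when `u` is a periodic primitive of `g`. -/
theorem ode_zero (u g : ℝ → ℝ) (hg : IntegrableOn g (Set.Ioo (0:ℝ) 1))
    (hu : ∀ s ∈ Set.Icc (0:ℝ) 1, u s = u 0 + ∫ τ in (0:ℝ)..s, g τ) (h1 : u 1 = u 0) :
    ∫ s in Set.Ioo (0:ℝ) 1, u s * g s = 0 := by
  have hgi : IntervalIntegrable g volume 0 1 := by
    rw [intervalIntegrable_iff_integrableOn_Ioo_of_le zero_le_one]; exact hg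
  have hac := hgi.absolutelyContinuousOnInterval_intervalIntegral (c := 0) (by simp)
  have hacu : AbsolutelyContinuousOnInterval (fun s => u 0 + ∫ τ in (0:ℝ)..s, g τ) 0 1 := by
    have hc : AbsolutelyContinuousOnInterval (fun _ : ℝ => u 0) 0 1 :=
      (LipschitzWith.const (u 0)).lipschitzOnWith.absolutelyContinuousOnInterval
    exact hc.add hac
  have key := hacu.integral_deriv_mul_eq_sub hacu
  have hz : ∫ τ in (0:ℝ)..1, g τ = 0 := by
    have := hu 1 (by simp); linarith
  simp only [hz, intervalIntegral.integral_same] at key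
  rw [sub_self] at key
  have e : ∫ x in (0:ℝ)..1, (2 * (u x * g x)) = 0 := by
    refine Eq.trans ?_ key
    apply intervalIntegral.integral_congr_ae
    filter_upwards [hgi.ae_hasDerivAt_integral] with x hx hx2
    have hx3 : x ∈ Set.uIcc (0:ℝ) 1 := Set.uIoc_subset_uIcc hx2
    have hd := (hx hx3 0 (by simp)).const_add (u 0)
    rw [hd.deriv]
    rw [Set.uIcc_of_le zero_le_one] at hx3
    rw [hu x hx3]; ring
  rw [intervalIntegral.integral_const_mul, intervalIntegral.integral_of_le zero_le_one,
    integral_Ioc_eq_integral_Ioo] at e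
  linarith

open Pointwise in
/-- quantitative Steinhaus -/
theorem steinhaus {d : ℕ} (S : Set (Fin d → ℝ)) (hS : MeasurableSet S) (hpos : 0 < volume S) :
    ∃ K ⊆ S, IsCompact K ∧ ∃ ρ > (0:ℝ), ∃ r > (0:ℝ), ∀ z : Fin d → ℝ, ‖z‖ < r →
      ρ ≤ (volume (K ∩ {w | w - z ∈ K})).toReal := by
  obtain ⟨K, hKS, hK, hKpos⟩ := hS.exists_lt_isCompact hpos
  have hKfin : volume K ≠ ⊤ := hK.measure_lt_top.ne
  obtain ⟨U, hKU, hU, hUlt⟩ := K.exists_isOpen_lt_of_lt (μ := volume) (volume K + volume K)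
    (ENNReal.lt_add_right hKfin hKpos.ne')
  have hUfin : volume U ≠ ⊤ := ne_top_of_lt hUlt
  obtain ⟨r, hr, hthick⟩ := hK.exists_thickening_subset_open hU hKU
  refine ⟨K, hKS, hK, 2 * (volume K).toReal - (volume U).toReal, ?_, r, hr, ?_⟩
  · have := (ENNReal.toReal_lt_toReal hUfin (by finiteness)).2 hUlt
    rw [ENNReal.toReal_add hKfin hKfin] at this
    linarith
  · intro z hz
    have hKm := hK.measurableSet
    set L : Set (Fin d → ℝ) := {w | w - z ∈ K} with hL
    have hLpre : L = (fun w => w - z) ⁻¹' K := rfl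
    have hLm : MeasurableSet L := by rw [hLpre]; exact (measurable_id.sub_const z) hKm
    have hLv : volume L = volume K := by
      rw [hLpre]; exact (measurePreserving_sub_right volume z).measure_preimage hKm.nullMeasurableSet
    have hLU : L ⊆ U := by
      intro w hw
      apply hthick
      rw [Metric.mem_thickening_iff]
      refine ⟨w - z, hw, ?_⟩
      simpa [dist_eq_norm] using hz
    have h1 : volume (K ∪ L) + volume (K ∩ L) = volume K + volume L := measure_union_add_inter K hLm
    have h2 : volume (K ∪ L) ≤ volume U := measure_mono (Set.union_subset hKU hLU)
    have f1 : volume (K ∪ L) ≠ ⊤ := ne_top_of_le_ne_top hUfin h2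
    have f2 : volume (K ∩ L) ≠ ⊤ := ne_top_of_le_ne_top hKfin (measure_mono Set.inter_subset_left)
    have h3 := congrArg ENNReal.toReal h1
    rw [hLv, ENNReal.toReal_add f1 f2, ENNReal.toReal_add hKfin hKfin] at h3
    have h4 := ENNReal.toReal_mono hUfin h2
    linarith

/-- abstract Poincaré inequality -/
theorem poincare_abs {d : ℕ} (a : (Fin d → ℝ) → ℝ)
    (hameas : Measurable a) (hanonneg : ∀ z, 0 ≤ a z)
    (haint : Integrable a) (hamass : ∫ z, a z = 1) :
    ∃ C : ℝ, 0 < C ∧ ∀ G : (Fin d → ℝ) → ℝ, Measurable G → (∀ z, 0 ≤ G z) →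
      (∃ M, ∀ z, G z ≤ M) → (∀ z, G (-z) = G z) →
      (∀ x y, G (x + y) ≤ 2 * G x + 2 * G y) →
      ∀ z ∈ cube d, G z ≤ C * ∫ w, a w * G w := by
  obtain ⟨δ, hδ, hpos⟩ : ∃ δ > (0:ℝ), 0 < volume {z | δ ≤ a z} := by
    by_contra hcon
    push Not at hcon
    have h0 : ∀ n : ℕ, ∀ᵐ z, a z < 1 / ((n:ℝ) + 1) := by
      intro n
      have := hcon (1 / ((n:ℝ) + 1)) (by positivity)
      rw [ae_iff]; simpa using this
    have h1 : a =ᵐ[volume] 0 := by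
      filter_upwards [ae_all_iff.2 h0] with z hz
      apply le_antisymm _ (hanonneg z)
      apply le_of_forall_pos_lt_add
      intro ε hε
      obtain ⟨n, hn⟩ := exists_nat_one_div_lt hε
      simpa using (hz n).trans hn
    rw [integral_congr_ae h1] at hamass
    simp at hamass
  obtain ⟨K, hKS, hK, ρ, hρ, r, hr, hov⟩ :=
    steinhaus {z | δ ≤ a z} (measurableSet_le measurable_const hameas) hpos
  obtain ⟨k, hk⟩ := exists_pow_lt_of_lt_one hr (show (1/2:ℝ) < 1 by norm_num)
  refine ⟨4 ^ k * (4 / (δ * ρ)), by positivity, ?_⟩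
  intro G hGm hG0 ⟨M, hM⟩ hGe hGs
  have hGint : ∀ L : Set (Fin d → ℝ), volume L ≠ ⊤ → IntegrableOn G L := by
    intro L hL
    refine Measure.integrableOn_of_bounded (M := M) hL hGm.aestronglyMeasurable ?_
    exact ae_of_all _ fun z => by rw [Real.norm_of_nonneg (hG0 z)]; exact hM z
  have hKm := hK.measurableSet
  have hKfin : volume K ≠ ⊤ := hK.measure_lt_top.ne
  have haG : Integrable (fun w => a w * G w) := by
    refine haint.mul_bdd (c := M) hGm.aestronglyMeasurable ?_
    exact ae_of_all _ fun z => by rw [Real.norm_of_nonneg (hG0 z)]; exact hM z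
  have hKG : δ * ∫ w in K, G w ≤ ∫ w, a w * G w := by
    rw [← integral_const_mul]
    calc ∫ w in K, δ * G w ≤ ∫ w in K, a w * G w := by
          refine setIntegral_mono_on ((hGint K hKfin).const_mul δ) haG.integrableOn hKm ?_
          intro w hw
          exact mul_le_mul_of_nonneg_right (hKS hw) (hG0 w)
      _ ≤ ∫ w, a w * G w := setIntegral_le_integral haG
          (ae_of_all _ fun w => mul_nonneg (hanonneg w) (hG0 w))
  have hball : ∀ z : Fin d → ℝ, ‖z‖ < r → G z ≤ 4 / (δ * ρ) * ∫ w, a w * G w := by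
    intro z hz
    have hv := hov z hz
    set N : Set (Fin d → ℝ) := {w | w - z ∈ K} with hN
    have hNm : MeasurableSet N := (measurable_id.sub_const z) hKm
    have hLm : MeasurableSet (K ∩ N) := hKm.inter hNm
    have hLfin : volume (K ∩ N) ≠ ⊤ :=
      ne_top_of_le_ne_top hKfin (measure_mono Set.inter_subset_left)
    have mpz := measurePreserving_sub_right (volume : Measure (Fin d → ℝ)) z
    have hNG : ∫ w in N, G (w - z) = ∫ w in K, G w :=
      mpz.setIntegral_preimage_emb (MeasurableEquiv.subRight z).measurableEmbedding G K
    have hNGi : IntegrableOn (fun w => G (w - z)) N :=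
      (mpz.integrableOn_comp_preimage (MeasurableEquiv.subRight z).measurableEmbedding).2 (hGint K hKfin)
    have e1 : ∫ w in K ∩ N, G w ≤ ∫ w in K, G w :=
      setIntegral_mono_set (hGint K hKfin) (ae_of_all _ hG0)
        (Filter.Eventually.of_forall Set.inter_subset_left)
    have e2 : ∫ w in K ∩ N, G (w - z) ≤ ∫ w in K, G w := by
      rw [← hNG]
      exact setIntegral_mono_set hNGi (ae_of_all _ fun w => hG0 _)
        (Filter.Eventually.of_forall Set.inter_subset_right)
    have hi2 : IntegrableOn (fun w => G (w - z)) (K ∩ N) := hNGi.mono_set Set.inter_subset_right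
    have e3 : ∫ w in K ∩ N, G z ≤ ∫ w in K ∩ N, (2 * G w + 2 * G (w - z)) := by
      refine integral_mono (integrableOn_const hLfin)
        (((hGint _ hLfin).const_mul 2).add (hi2.const_mul 2)) ?_
      intro w
      have := hGs w (-(w - z))
      rw [hGe] at this
      simpa using this
    rw [integral_add ((hGint _ hLfin).const_mul 2) (hi2.const_mul 2), integral_const_mul,
      integral_const_mul, setIntegral_const, smul_eq_mul] at e3
    have e4 : ρ * G z ≤ (volume.real (K ∩ N)) * G z := mul_le_mul_of_nonneg_right hv (hG0 z)
    rw [div_mul_eq_mul_div, le_div_iff₀ (by positivity)]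
    nlinarith
  have hdbl : ∀ k : ℕ, ∀ z, G ((2:ℝ) ^ k • z) ≤ 4 ^ k * G z := by
    intro k
    induction k with
    | zero => intro z; simp
    | succ n ih =>
      intro z
      have : (2:ℝ) ^ (n+1) • z = (2:ℝ)^n • z + (2:ℝ)^n • z := by
        rw [← add_smul]; congr 1; ring
      rw [this]
      have := hGs ((2:ℝ)^n • z) ((2:ℝ)^n • z)
      have := ih z
      rw [pow_succ]; linarith
  intro z hz
  have hzn : ‖z‖ ≤ 1 := by
    rw [pi_norm_le_iff_of_nonneg zero_le_one]
    intro i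
    have := hz i (Set.mem_univ i)
    rw [Real.norm_of_nonneg this.1]; exact this.2.le
  have h1 := hdbl k ((1/2:ℝ)^k • z)
  have h2 : (2:ℝ)^k • (1/2:ℝ)^k • z = z := by
    rw [smul_smul, ← mul_pow]; norm_num
  rw [h2] at h1
  have h3 := hball ((1/2:ℝ)^k • z) (by
    rw [norm_smul, Real.norm_of_nonneg (by positivity)]
    have : (0:ℝ) < (1/2)^k := by positivity
    nlinarith [norm_nonneg z])
  calc G z ≤ _ := h1
    _ ≤ 4 ^ k * (4 / (δ * ρ) * ∫ w, a w * G w) := by gcongr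
    _ = _ := by ring

theorem cs_ineq {X : Type*} [MeasurableSpace X] (ν : Measure X) (u v : X → ℝ)
    (hu : MemLp u 2 ν) (hv : MemLp v 2 ν) :
    |∫ x, u x * v x ∂ν| ≤ √(∫ x, u x ^ 2 ∂ν) * √(∫ x, v x ^ 2 ∂ν) := by
  have h := integral_mul_norm_le_Lp_mul_Lq (μ := ν) (f := u) (g := v) (p := 2) (q := 2)
    (by rw [Real.holderConjugate_iff]; norm_num) (by simpa using hu) (by simpa using hv)
  calc |∫ x, u x * v x ∂ν| ≤ ∫ x, ‖u x‖ * ‖v x‖ ∂ν := by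
        rw [← Real.norm_eq_abs]
        refine (norm_integral_le_integral_norm _).trans (le_of_eq ?_)
        simp only [norm_mul]
    _ ≤ _ := h
    _ = _ := by
        rw [Real.sqrt_eq_rpow, Real.sqrt_eq_rpow]
        simp

section aux

variable {d : ℕ}

theorem memLp_sh (α : Measure (Fin d → ℝ)) [IsProbabilityMeasure α] (b : (Fin d → ℝ) × ℝ → ℝ)
    (hb : MemLp b 2 (cellM d)) :
    MemLp (fun q : (Fin d → ℝ) × ((Fin d → ℝ) × ℝ) => b (sh q.1 q.2)) 2 (α.prod (cellM d)) :=
  hb.comp_measurePreserving (measurePreserving_snd.comp (skew_mp α))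

theorem memLp_snd (α : Measure (Fin d → ℝ)) [IsProbabilityMeasure α] (b : (Fin d → ℝ) × ℝ → ℝ)
    (hb : MemLp b 2 (cellM d)) :
    MemLp (fun q : (Fin d → ℝ) × ((Fin d → ℝ) × ℝ) => b q.2) 2 (α.prod (cellM d)) :=
  hb.comp_measurePreserving measurePreserving_snd

theorem b_sh (b : (Fin d → ℝ) × ℝ → ℝ)
    (hper : ∀ ξ s, ∀ k : Fin d → ℤ, b (ξ + fun i => (k i : ℝ), s) = b (ξ, s))
    (z : Fin d → ℝ) (p : (Fin d → ℝ) × ℝ) : b (sh z p) = b (p.1 + z, p.2) :=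
  per_frac (fun ξ => b (ξ, p.2)) (fun ξ k => hper ξ p.2 k) (p.1 + z)

theorem b_sh_sh (b : (Fin d → ℝ) × ℝ → ℝ)
    (hper : ∀ ξ s, ∀ k : Fin d → ℤ, b (ξ + fun i => (k i : ℝ), s) = b (ξ, s))
    (z w : Fin d → ℝ) (p : (Fin d → ℝ) × ℝ) : b (sh w (sh z p)) = b (sh (z + w) p) := by
  rw [b_sh b hper, b_sh b hper]
  have := per_frac (fun ξ => b (ξ + w, p.2)) (fun ξ k => by
    rw [add_right_comm]; exact hper _ p.2 k) (p.1 + z)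
  simp only [sh]
  rw [this, add_assoc]

theorem b_sh_neg (b : (Fin d → ℝ) × ℝ → ℝ)
    (hper : ∀ ξ s, ∀ k : Fin d → ℤ, b (ξ + fun i => (k i : ℝ), s) = b (ξ, s))
    (z : Fin d → ℝ) (p : (Fin d → ℝ) × ℝ) : b (sh (-z) (sh z p)) = b p := by
  rw [b_sh_sh b hper, b_sh b hper]; simp

theorem b_sh_neg' (b : (Fin d → ℝ) × ℝ → ℝ)
    (hper : ∀ ξ s, ∀ k : Fin d → ℤ, b (ξ + fun i => (k i : ℝ), s) = b (ξ, s))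
    (z : Fin d → ℝ) (p : (Fin d → ℝ) × ℝ) : b (sh z (sh (-z) p)) = b p := by
  rw [b_sh_sh b hper, b_sh b hper]; simp

/-- Jump kernel as a probability measure. -/
def jumpM (a : (Fin d → ℝ) → ℝ) : Measure (Fin d → ℝ) :=
  volume.withDensity fun z => ENNReal.ofReal (a z)

theorem jumpM_prob (a : (Fin d → ℝ) → ℝ) (hanonneg : ∀ z, 0 ≤ a z)
    (haint : Integrable a) (hamass : ∫ z, a z = 1) : IsProbabilityMeasure (jumpM a) := by
  refine ⟨?_⟩
  rw [jumpM, withDensity_apply _ MeasurableSet.univ, Measure.restrict_univ,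
    ← ofReal_integral_eq_lintegral_ofReal haint (ae_of_all _ hanonneg), hamass]
  simp

theorem jumpM_integral (a : (Fin d → ℝ) → ℝ) (hameas : Measurable a) (hanonneg : ∀ z, 0 ≤ a z)
    (g : (Fin d → ℝ) → ℝ) : ∫ z, g z ∂(jumpM a) = ∫ z, a z * g z := by
  rw [jumpM, integral_withDensity_eq_integral_toReal_smul hameas.ennreal_ofReal
    (ae_of_all _ fun _ => ENNReal.ofReal_lt_top)]
  simp [ENNReal.toReal_ofReal (hanonneg _)]

theorem jumpM_neg (a : (Fin d → ℝ) → ℝ) (hameas : Measurable a) (hasymm : ∀ z, a (-z) = a z) :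
    MeasurePreserving (fun z : Fin d → ℝ => -z) (jumpM a) (jumpM a) := by
  refine ⟨measurable_neg, ?_⟩
  ext s hs
  rw [Measure.map_apply measurable_neg hs, jumpM, withDensity_apply _ (measurable_neg hs),
    withDensity_apply _ hs]
  have := (Measure.measurePreserving_neg (volume : Measure (Fin d → ℝ))).setLIntegral_comp_preimage
    hs (f := fun z => ENNReal.ofReal (a z)) hameas.ennreal_ofReal
  rw [← this]
  simp only [hasymm]

theorem flip_mp (α : Measure (Fin d → ℝ)) [IsProbabilityMeasure α]
    (hα : MeasurePreserving (fun z : Fin d → ℝ => -z) α α) :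
    MeasurePreserving (fun q : (Fin d → ℝ) × ((Fin d → ℝ) × ℝ) => (-q.1, sh q.1 q.2))
      (α.prod (cellM d)) (α.prod (cellM d)) :=
  (hα.prod (MeasurePreserving.id (cellM d))).comp (skew_mp α)

theorem flip_integral (α : Measure (Fin d → ℝ)) [IsProbabilityMeasure α]
    (hα : MeasurePreserving (fun z : Fin d → ℝ => -z) α α)
    (H : (Fin d → ℝ) × ((Fin d → ℝ) × ℝ) → ℝ) (hH : Measurable H) :
    ∫ q, H (-q.1, sh q.1 q.2) ∂(α.prod (cellM d)) = ∫ q, H q ∂(α.prod (cellM d)) := by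
  have h := flip_mp α hα
  have e := integral_map (μ := α.prod (cellM d)) h.measurable.aemeasurable
    (f := H) hH.aestronglyMeasurable
  rw [h.map_eq] at e
  exact e.symm

/-- The difference `b(ξ+z,s) - b(ξ,s)`. -/
def Df (b : (Fin d → ℝ) × ℝ → ℝ) (q : (Fin d → ℝ) × ((Fin d → ℝ) × ℝ)) : ℝ :=
  b (sh q.1 q.2) - b q.2

theorem Df_meas (b : (Fin d → ℝ) × ℝ → ℝ) (hb : Measurable b) : Measurable (Df b) :=
  (hb.comp sh_measurable).sub (hb.comp measurable_snd)

theorem Df_memLp (α : Measure (Fin d → ℝ)) [IsProbabilityMeasure α] (b : (Fin d → ℝ) × ℝ → ℝ)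
    (hb : MemLp b 2 (cellM d)) : MemLp (Df b) 2 (α.prod (cellM d)) :=
  (memLp_sh α b hb).sub (memLp_snd α b hb)

theorem Df_flip (b : (Fin d → ℝ) × ℝ → ℝ)
    (hper : ∀ ξ s, ∀ k : Fin d → ℤ, b (ξ + fun i => (k i : ℝ), s) = b (ξ, s))
    (q : (Fin d → ℝ) × ((Fin d → ℝ) × ℝ)) : Df b (-q.1, sh q.1 q.2) = - Df b q := by
  simp only [Df]
  rw [b_sh_neg b hper]; ring

theorem WDf_memLp (α : Measure (Fin d → ℝ)) [IsProbabilityMeasure α] (b : (Fin d → ℝ) × ℝ → ℝ)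
    (hb : MemLp b 2 (cellM d)) (W : (Fin d → ℝ) × ((Fin d → ℝ) × ℝ) → ℝ) (hW : Measurable W)
    (M : ℝ) (hM : ∀ q, |W q| ≤ M) : MemLp (fun q => W q * Df b q) 2 (α.prod (cellM d)) := by
  refine (Df_memLp α b hb).of_le_mul (c := M)
    (hW.aestronglyMeasurable.mul (Df_memLp α b hb).1) (ae_of_all _ fun q => ?_)
  rw [norm_mul]
  exact mul_le_mul_of_nonneg_right (hM q) (norm_nonneg _)

/-- antisymmetry: the (weighted in time) mean of `A b` vanishes -/
theorem mean_zero (α : Measure (Fin d → ℝ)) [IsProbabilityMeasure α]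
    (hα : MeasurePreserving (fun z : Fin d → ℝ => -z) α α)
    (b : (Fin d → ℝ) × ℝ → ℝ) (hbm : Measurable b)
    (hper : ∀ ξ s, ∀ k : Fin d → ℤ, b (ξ + fun i => (k i : ℝ), s) = b (ξ, s))
    (W : (Fin d → ℝ) × ((Fin d → ℝ) × ℝ) → ℝ) (hW : Measurable W)
    (hWf : ∀ q, W (-q.1, sh q.1 q.2) = W q) (χ : ℝ → ℝ) (hχ : Measurable χ) :
    ∫ q, χ q.2.2 * (W q * Df b q) ∂(α.prod (cellM d)) = 0 := by
  have h := flip_integral α hα (fun q => χ q.2.2 * (W q * Df b q))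
    ((hχ.comp measurable_snd.snd).mul (hW.mul (Df_meas b hbm)))
  simp only [hWf, Df_flip b hper] at h
  have e : ∀ q : (Fin d → ℝ) × ((Fin d → ℝ) × ℝ),
      χ (sh q.1 q.2).2 * (W q * -Df b q) = -(χ q.2.2 * (W q * Df b q)) := by
    intro q; simp only [sh]; ring
  simp only [e, integral_neg] at h
  linarith

/-- energy identity -/
theorem energy (α : Measure (Fin d → ℝ)) [IsProbabilityMeasure α]
    (hα : MeasurePreserving (fun z : Fin d → ℝ => -z) α α)
    (b : (Fin d → ℝ) × ℝ → ℝ) (hbm : Measurable b) (hb : MemLp b 2 (cellM d))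
    (hper : ∀ ξ s, ∀ k : Fin d → ℤ, b (ξ + fun i => (k i : ℝ), s) = b (ξ, s))
    (W : (Fin d → ℝ) × ((Fin d → ℝ) × ℝ) → ℝ) (hW : Measurable W)
    (M : ℝ) (hM : ∀ q, |W q| ≤ M)
    (hWf : ∀ q, W (-q.1, sh q.1 q.2) = W q) :
    ∫ q, W q * (Df b q) ^ 2 ∂(α.prod (cellM d)) =
      - (2 * ∫ q, b q.2 * (W q * Df b q) ∂(α.prod (cellM d))) := by
  have h := flip_integral α hα (fun q => b q.2 * (W q * Df b q))
    ((hbm.comp measurable_snd).mul (hW.mul (Df_meas b hbm)))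
  simp only [hWf, Df_flip b hper] at h
  have i1 : Integrable (fun q => b q.2 * (W q * Df b q)) (α.prod (cellM d)) :=
    (memLp_snd α b hb).integrable_mul (WDf_memLp α b hb W hW M hM)
  have i2 : Integrable (fun q => b (sh q.1 q.2) * (W q * Df b q)) (α.prod (cellM d)) :=
    (memLp_sh α b hb).integrable_mul (WDf_memLp α b hb W hW M hM)
  have e : ∀ q : (Fin d → ℝ) × ((Fin d → ℝ) × ℝ), W q * (Df b q) ^ 2 =
      b (sh q.1 q.2) * (W q * Df b q) - b q.2 * (W q * Df b q) := by
    intro q; simp only [Df]; ring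
  simp only [e]
  rw [integral_sub i2 i1]
  simp only [mul_neg, integral_neg] at h
  linarith

/-- Poincaré inequality -/
theorem poincare (a : (Fin d → ℝ) → ℝ)
    (hameas : Measurable a) (hanonneg : ∀ z, 0 ≤ a z)
    (haint : Integrable a) (hamass : ∫ z, a z = 1) :
    ∃ C : ℝ, 0 < C ∧ ∀ b : (Fin d → ℝ) × ℝ → ℝ, Measurable b → MemLp b 2 (cellM d) →
      (∀ ξ s, ∀ k : Fin d → ℤ, b (ξ + fun i => (k i : ℝ), s) = b (ξ, s)) →
      2 * ∫ p, b p ^ 2 ∂(cellM d) ≤ C * ∫ q, (Df b q) ^ 2 ∂((jumpM a).prod (cellM d))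
        + 2 * ∫ p, b p * (∫ η, b (η, p.2) ∂(cubeM d)) ∂(cellM d) := by
  obtain ⟨C, hC, hP⟩ := poincare_abs a hameas hanonneg haint hamass
  have := jumpM_prob a hanonneg haint hamass
  refine ⟨C, hC, ?_⟩
  intro b hbm hb hper
  have hshz : ∀ z, MemLp (fun p => b (sh z p)) 2 (cellM d) := fun z =>
    hb.comp_measurePreserving (sh_mp z)
  have hsq : ∀ z, ∀ g : (Fin d → ℝ) × ℝ → ℝ, Measurable g →
      ∫ p, g (sh z p) ∂(cellM d) = ∫ p, g p ∂(cellM d) := by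
    intro z g hg
    have e := integral_map (μ := cellM d) (sh_mp z).measurable.aemeasurable
      (f := g) hg.aestronglyMeasurable
    rw [(sh_mp z).map_eq] at e
    exact e.symm
  have hDz : ∀ z, Integrable (fun p => (Df b (z, p)) ^ 2) (cellM d) := fun z =>
    ((hshz z).sub hb).integrable_sq
  let G : (Fin d → ℝ) → ℝ := fun z => ∫ p, (Df b (z, p)) ^ 2 ∂(cellM d)
  have hGm : Measurable G := by
    have : StronglyMeasurable (fun q => (Df b q) ^ 2) := ((Df_meas b hbm).pow_const 2).stronglyMeasurable
    exact this.integral_prod_right'.measurable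
  have hG0 : ∀ z, 0 ≤ G z := fun z => integral_nonneg fun p => sq_nonneg _
  have hb2 : ∀ z, ∫ p, b (sh z p) ^ 2 ∂(cellM d) = ∫ p, b p ^ 2 ∂(cellM d) := fun z =>
    hsq z (fun p => b p ^ 2) (hbm.pow_const 2)
  have hGM : ∀ z, G z ≤ 4 * ∫ p, b p ^ 2 ∂(cellM d) := by
    intro z
    have : G z ≤ ∫ p, (2 * b (sh z p) ^ 2 + 2 * b p ^ 2) ∂(cellM d) := by
      refine integral_mono (hDz z) (((hshz z).integrable_sq.const_mul 2).add
        (hb.integrable_sq.const_mul 2)) fun p => ?_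
      simp only [Df]
      nlinarith [sq_nonneg (b (sh z p) + b p)]
    rw [integral_add ((hshz z).integrable_sq.const_mul 2) (hb.integrable_sq.const_mul 2),
      integral_const_mul, integral_const_mul, hb2] at this
    linarith
  have hDm : ∀ z, Measurable (fun p => (Df b (z, p)) ^ 2) := fun z =>
    ((Df_meas b hbm).comp measurable_prodMk_left).pow_const 2
  have hGe : ∀ z, G (-z) = G z := by
    intro z
    have := hsq z (fun p => (Df b (-z, p)) ^ 2) (hDm _)
    simp only [G]
    rw [← this]
    congr 1
    funext p
    have := Df_flip b hper (z, p)
    simp only at this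
    rw [this]; ring
  have hGs : ∀ x y, G (x + y) ≤ 2 * G x + 2 * G y := by
    intro x y
    have h1 := hsq x (fun p => (Df b (y, p)) ^ 2) (hDm _)
    have i1 : Integrable (fun p => (Df b (y, sh x p)) ^ 2) (cellM d) :=
      (sh_mp x).integrable_comp_of_integrable (hDz y)
    have : G (x + y) ≤ ∫ p, (2 * (Df b (x, p)) ^ 2 + 2 * (Df b (y, sh x p)) ^ 2) ∂(cellM d) := by
      refine integral_mono (hDz _) (((hDz x).const_mul 2).add (i1.const_mul 2)) fun p => ?_
      simp only [Df]
      rw [b_sh_sh b hper]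
      nlinarith [sq_nonneg ((b (sh x p) - b p) - (b (sh (x + y) p) - b (sh x p)))]
    rw [integral_add ((hDz x).const_mul 2) (i1.const_mul 2), integral_const_mul,
      integral_const_mul, h1] at this
    exact this
  have key := hP G hGm hG0 ⟨_, hGM⟩ hGe hGs
  rw [← jumpM_integral a hameas hanonneg] at key
  have eJ : ∫ z, G z ∂(jumpM a) = ∫ q, (Df b q) ^ 2 ∂((jumpM a).prod (cellM d)) :=
    (integral_prod _ (Df_memLp (jumpM a) b hb).integrable_sq).symm
  rw [eJ] at key
  have eC : ∫ z, G z ∂(cubeM d) = ∫ q, (Df b q) ^ 2 ∂((cubeM d).prod (cellM d)) :=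
    (integral_prod _ (Df_memLp (cubeM d) b hb).integrable_sq).symm
  have ms := memLp_sh (cubeM d) b hb
  have mb := memLp_snd (cubeM d) b hb
  have im : Integrable (fun q : (Fin d → ℝ) × ((Fin d → ℝ) × ℝ) => b q.2 * b (sh q.1 q.2))
    ((cubeM d).prod (cellM d)) := mb.integrable_mul ms
  have e1 : ∫ q, b (sh q.1 q.2) ^ 2 ∂((cubeM d).prod (cellM d)) = ∫ p, b p ^ 2 ∂(cellM d) := by
    rw [integral_prod _ ms.integrable_sq]
    simp only [hb2]
    simp
  have e2 : ∫ q, b q.2 ^ 2 ∂((cubeM d).prod (cellM d)) = ∫ p, b p ^ 2 ∂(cellM d) := by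
    rw [integral_prod _ mb.integrable_sq]
    simp
  have e3 : ∫ q, b q.2 * b (sh q.1 q.2) ∂((cubeM d).prod (cellM d)) =
      ∫ p, b p * (∫ η, b (η, p.2) ∂(cubeM d)) ∂(cellM d) := by
    rw [integral_prod_symm _ im]
    congr 1
    funext p
    simp only
    rw [integral_const_mul]
    congr 1
    have e := integral_map (μ := cubeM d) (frac_mp p.1).measurable.aemeasurable
      (f := fun η => b (η, p.2)) (hbm.comp measurable_prodMk_right).aestronglyMeasurable
    rw [(frac_mp p.1).map_eq] at e
    rw [e]
    simp only [sh, add_comm]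
  have e4 : ∫ q, (Df b q) ^ 2 ∂((cubeM d).prod (cellM d)) = 2 * ∫ p, b p ^ 2 ∂(cellM d)
      - 2 * ∫ p, b p * (∫ η, b (η, p.2) ∂(cubeM d)) ∂(cellM d) := by
    have : ∀ q : (Fin d → ℝ) × ((Fin d → ℝ) × ℝ), (Df b q) ^ 2 =
        b (sh q.1 q.2) ^ 2 + b q.2 ^ 2 - 2 * (b q.2 * b (sh q.1 q.2)) := by
      intro q; simp only [Df]; ring
    simp only [this]
    have i12 : Integrable (fun q : (Fin d → ℝ) × ((Fin d → ℝ) × ℝ) =>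
        b (sh q.1 q.2) ^ 2 + b q.2 ^ 2) ((cubeM d).prod (cellM d)) :=
      ms.integrable_sq.add mb.integrable_sq
    rw [integral_sub i12 (im.const_mul 2),
      integral_add ms.integrable_sq mb.integrable_sq, integral_const_mul, e1, e2, e3]
    ring
  have hGint : Integrable G (cubeM d) := (Df_memLp (cubeM d) b hb).integrable_sq.integral_prod_left
  have e5 : ∫ z, G z ∂(cubeM d) ≤ ∫ z, (C * ∫ q, (Df b q) ^ 2 ∂((jumpM a).prod (cellM d))) ∂(cubeM d) := by
    refine integral_mono_ae hGint (integrable_const _) ?_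
    have hm : MeasurableSet (cube d) := MeasurableSet.univ_pi fun _ => measurableSet_Ico
    exact (ae_restrict_iff' hm).2 (ae_of_all _ key)
  rw [eC, e4] at e5
  simp only [integral_const, probReal_univ, one_smul] at e5
  linarith

theorem mean_bound (b F θ : (Fin d → ℝ) × ℝ → ℝ) (hb : MemLp b 2 (cellM d))
    (hF : Integrable F (cellM d)) (hθ : MemLp θ 2 (cellM d))
    (hFχ : ∀ χ : ℝ → ℝ, Measurable χ → (∀ s, |χ s| ≤ 1) → ∫ p, χ p.2 * F p ∂(cellM d) = 0)
    (hode : ∀ᵐ ξ ∂(cubeM d), ∀ s ∈ Set.Icc (0:ℝ) 1,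
      b (ξ, s) = b (ξ, 0) + ∫ τ in (0:ℝ)..s, (F (ξ, τ) + θ (ξ, τ)))
    (hb0 : ∫ p, b p ∂(cellM d) = 0) :
    ∀ᵐ s ∂timeM, |∫ η, b (η, s) ∂(cubeM d)| ≤ √(∫ p, θ p ^ 2 ∂(cellM d)) := by
  have hθi : Integrable θ (cellM d) := hθ.integrable one_le_two
  have hbi : Integrable b (cellM d) := hb.integrable one_le_two
  have hfi : Integrable (fun p => F p + θ p) (cellM d) := hF.add hθi
  have hfξ : ∀ᵐ ξ ∂(cubeM d), Integrable (fun s => F (ξ, s) + θ (ξ, s)) timeM :=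
    Integrable.prod_right_ae (μ := cubeM d) (ν := timeM) hfi
  have hbs : ∀ᵐ s ∂timeM, Integrable (fun ξ => b (ξ, s)) (cubeM d) :=
    Integrable.prod_left_ae (μ := cubeM d) (ν := timeM) hbi
  have hθ1 : ∫ p, |θ p| ∂(cellM d) ≤ √(∫ p, θ p ^ 2 ∂(cellM d)) := by
    have h := cs_ineq (cellM d) (fun p => |θ p|) (fun _ => (1:ℝ)) hθ.abs (memLp_const 1)
    simp only [mul_one, sq_abs, one_pow, integral_const, probReal_univ, smul_eq_mul,
      Real.sqrt_one] at h
    exact (le_abs_self _).trans h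
  have hlt : ∀ t s : ℝ, t ∈ Set.Ioo (0:ℝ) 1 → s ∈ Set.Ioo (0:ℝ) 1 → t ≤ s →
      Integrable (fun ξ => b (ξ, s)) (cubeM d) → Integrable (fun ξ => b (ξ, t)) (cubeM d) →
      |(∫ η, b (η, s) ∂(cubeM d)) - ∫ η, b (η, t) ∂(cubeM d)| ≤ √(∫ p, θ p ^ 2 ∂(cellM d)) := by
    intro t s ht hs hts is it
    let χ : ℝ → ℝ := (Set.Ioc t s).indicator 1
    have hχm : Measurable χ := measurable_one.indicator measurableSet_Ioc
    have hχ1 : ∀ s, |χ s| ≤ 1 := by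
      intro τ
      by_cases h : τ ∈ Set.Ioc t s <;> simp [χ, h]
    have hχn : AEStronglyMeasurable (fun p : (Fin d → ℝ) × ℝ => χ p.2) (cellM d) :=
      (hχm.comp measurable_snd).aestronglyMeasurable
    have iF : Integrable (fun p => χ p.2 * F p) (cellM d) :=
      hF.bdd_mul (c := 1) hχn (ae_of_all _ fun p => hχ1 _)
    have iθ : Integrable (fun p => χ p.2 * θ p) (cellM d) :=
      hθi.bdd_mul (c := 1) hχn (ae_of_all _ fun p => hχ1 _)
    have iFθ : Integrable (fun p => χ p.2 * F p + χ p.2 * θ p) (cellM d) := iF.add iθ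
    rw [← integral_sub is it]
    have e1 : ∫ ξ, (b (ξ, s) - b (ξ, t)) ∂(cubeM d) =
        ∫ ξ, ∫ τ, (χ τ * F (ξ, τ) + χ τ * θ (ξ, τ)) ∂timeM ∂(cubeM d) := by
      apply integral_congr_ae
      filter_upwards [hode, hfξ] with ξ h1 h2
      have h2' : IntervalIntegrable (fun s => F (ξ, s) + θ (ξ, s)) volume 0 1 := by
        rw [intervalIntegrable_iff_integrableOn_Ioo_of_le zero_le_one]; exact h2
      have hsub : ∀ r ∈ Set.Ioo (0:ℝ) 1, IntervalIntegrable (fun s => F (ξ, s) + θ (ξ, s)) volume 0 r := by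
        intro r hr
        apply h2'.mono_set
        rw [Set.uIcc_of_le hr.1.le, Set.uIcc_of_le zero_le_one]
        exact Set.Icc_subset_Icc_right hr.2.le
      rw [h1 s ⟨hs.1.le, hs.2.le⟩, h1 t ⟨ht.1.le, ht.2.le⟩, add_sub_add_left_eq_sub,
        intervalIntegral.integral_interval_sub_left (hsub s hs) (hsub t ht),
        intervalIntegral.integral_of_le hts]
      have hr : (volume : Measure ℝ).restrict (Set.Ioc t s) = timeM.restrict (Set.Ioc t s) := by
        rw [timeM, Measure.restrict_restrict measurableSet_Ioc]
        congr 1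
        refine (Set.inter_eq_left.2 ?_).symm
        intro x hx
        exact ⟨ht.1.trans hx.1, hx.2.trans_lt hs.2⟩
      rw [hr, ← integral_indicator measurableSet_Ioc]
      congr 1
      funext τ
      by_cases h : τ ∈ Set.Ioc t s <;> simp [χ, h]
    have e2 : ∫ ξ, ∫ τ, (χ τ * F (ξ, τ) + χ τ * θ (ξ, τ)) ∂timeM ∂(cubeM d) =
        ∫ p, (χ p.2 * F p + χ p.2 * θ p) ∂(cellM d) :=
      (integral_prod (μ := cubeM d) (ν := timeM) _ iFθ).symm
    rw [e1, e2, integral_add iF iθ, hFχ χ hχm hχ1, zero_add]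
    refine le_trans ?_ hθ1
    rw [← Real.norm_eq_abs]
    refine norm_integral_le_of_norm_le hθi.abs (ae_of_all _ fun p => ?_)
    rw [norm_mul, Real.norm_eq_abs, Real.norm_eq_abs]
    exact mul_le_of_le_one_left (abs_nonneg _) (hχ1 _)
  have hm0 : ∫ t, (∫ η, b (η, t) ∂(cubeM d)) ∂timeM = 0 := by
    rw [← hb0]
    exact (integral_prod_symm (μ := cubeM d) (ν := timeM) _ hbi).symm
  have hmi : Integrable (fun t => ∫ η, b (η, t) ∂(cubeM d)) timeM :=
    Integrable.integral_prod_right (μ := cubeM d) (ν := timeM) hbi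
  have hmem : ∀ᵐ s ∂timeM, s ∈ Set.Ioo (0:ℝ) 1 := ae_restrict_mem measurableSet_Ioo
  filter_upwards [hbs, hmem] with s is hs
  have e : ∫ η, b (η, s) ∂(cubeM d) =
      ∫ t, ((∫ η, b (η, s) ∂(cubeM d)) - ∫ η, b (η, t) ∂(cubeM d)) ∂timeM := by
    rw [integral_sub (integrable_const _) hmi, hm0]
    simp
  rw [e, ← Real.norm_eq_abs]
  have := norm_integral_le_of_norm_le_const (μ := timeM)
    (f := fun t => (∫ η, b (η, s) ∂(cubeM d)) - ∫ η, b (η, t) ∂(cubeM d))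
    (C := √(∫ p, θ p ^ 2 ∂(cellM d))) (by
      filter_upwards [hbs, hmem] with t it ht
      rw [Real.norm_eq_abs]
      rcases le_total t s with h | h
      · exact hlt t s ht hs h is it
      · rw [abs_sub_comm]
        exact hlt s t hs ht h it is)
  simpa using this

theorem final_est (C μm x y : ℝ) (hC : 0 < C) (hμ : 0 < μm) (hx : 0 ≤ x) (hy : 0 ≤ y) (E : ℝ)
    (h1 : 2 * x ^ 2 ≤ C * E + 2 * (x * y)) (h2 : μm * E ≤ 2 * (x * y)) :
    x ≤ (C / μm + 1) * y := by
  rcases hx.eq_or_lt with rfl | hx'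
  · positivity
  have hE : E ≤ 2 * (x * y) / μm := by rw [le_div_iff₀ hμ]; linarith
  have h3 : C * E ≤ C * (2 * (x * y) / μm) := by gcongr
  have h4 : C * (2 * (x * y) / μm) = 2 * (x * (C / μm * y)) := by ring
  have : x * x ≤ x * ((C / μm + 1) * y) := by nlinarith
  exact le_of_mul_le_mul_left this hx'

theorem Aop_eq (a : (Fin d → ℝ) → ℝ) (hameas : Measurable a) (hanonneg : ∀ z, 0 ≤ a z)
    (hasymm : ∀ z, a (-z) = a z) (μ : (Fin d → ℝ) → (Fin d → ℝ) → ℝ → ℝ)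
    (β : (Fin d → ℝ) → ℝ → ℝ)
    (hper : ∀ ξ s, ∀ k : Fin d → ℤ, β (ξ + fun i => (k i : ℝ)) s = β ξ s)
    (ξ : Fin d → ℝ) (s : ℝ) :
    Aop a μ s (fun η => β η s) ξ =
      ∫ z, μ ξ (ξ + z) s * Df (fun p => β p.1 p.2) (z, (ξ, s)) ∂(jumpM a) := by
  rw [jumpM_integral a hameas hanonneg, Aop,
    ← integral_add_left_eq_self (fun η => a (ξ - η) * μ ξ η s * (β η s - β ξ s)) ξ]
  congr 1
  funext z
  simp only [Df]
  rw [b_sh (fun p => β p.1 p.2) hper z (ξ, s)]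
  simp only [sub_add_cancel_left, hasymm]
  ring

end aux

/-- There is `C₃ > 0`, depending only on `d`, `a`, `μ⁻`, `μ⁺`, such that every
time-periodic solution `β` of `∂_s β - A(s)β = θ` with zero mean over `𝕋^{d+1}`
satisfies `‖β‖_{L²(𝕋^{d+1})} ≤ C₃ ‖θ‖_{L²(𝕋^{d+1})}`. -/
theorem stmt11 {d : ℕ} (hd : 1 ≤ d)
    (a : (Fin d → ℝ) → ℝ) (μm μp : ℝ)
    (hameas : Measurable a) (hanonneg : ∀ z, 0 ≤ a z)
    (haint : Integrable a) (hamass : ∫ z, a z = 1)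
    (hamom : Integrable (fun z => ‖z‖ ^ 2 * a z))
    (hasymm : ∀ z, a (-z) = a z)
    (hμm : 0 < μm) :
    ∃ C : ℝ, 0 < C ∧
      ∀ μ : (Fin d → ℝ) → (Fin d → ℝ) → ℝ → ℝ,
        (Measurable fun p : (Fin d → ℝ) × (Fin d → ℝ) × ℝ => μ p.1 p.2.1 p.2.2) →
        (∀ ξ η s, ∀ k : Fin d → ℤ, μ (ξ + fun i => (k i : ℝ)) η s = μ ξ η s) →
        (∀ ξ η s, ∀ k : Fin d → ℤ, μ ξ (η + fun i => (k i : ℝ)) s = μ ξ η s) →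
        (∀ ξ η s, μ ξ η (s + 1) = μ ξ η s) →
        (∀ ξ η s, μ ξ η s = μ η ξ s) →
        (∀ ξ η s, μm ≤ μ ξ η s) → (∀ ξ η s, μ ξ η s ≤ μp) →
        ∀ θ : (Fin d → ℝ) → ℝ → ℝ,
          (Measurable fun p : (Fin d → ℝ) × ℝ => θ p.1 p.2) →
          (∀ ξ s, ∀ k : Fin d → ℤ, θ (ξ + fun i => (k i : ℝ)) s = θ ξ s) →
          (∀ ξ s, θ ξ (s + 1) = θ ξ s) →
          IntegrableOn (fun p : (Fin d → ℝ) × ℝ => (θ p.1 p.2) ^ 2)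
            (cube d ×ˢ Set.Ioo (0 : ℝ) 1) →
          (∫ p in cube d ×ˢ Set.Ioo (0 : ℝ) 1, θ (Prod.fst p) (Prod.snd p)) = 0 →
          ∀ β, IsCellSol a μ θ β →
            (∫ p in cube d ×ˢ Set.Ioo (0 : ℝ) 1, β (Prod.fst p) (Prod.snd p)) = 0 →
            Real.sqrt (∫ p in cube d ×ˢ Set.Ioo (0 : ℝ) 1,
                (β (Prod.fst p) (Prod.snd p)) ^ 2) ≤
              C * Real.sqrt (∫ p in cube d ×ˢ Set.Ioo (0 : ℝ) 1,
                (θ (Prod.fst p) (Prod.snd p)) ^ 2) := by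
  obtain ⟨C, hC, hP⟩ := poincare a hameas hanonneg haint hamass
  have := jumpM_prob a hanonneg haint hamass
  have hα := jumpM_neg a hameas hasymm
  refine ⟨C / μm + 1, by positivity, ?_⟩
  intro μ hμmeas hμ1 hμ2 _ hμs hμlo hμhi θ hθm _ _ hθ2 _ β hβ hβ0
  obtain ⟨hβm, hβper, hβt, hβ2, hode⟩ := hβ
  rw [← cellM_eq] at *
  rw [IntegrableOn, ← cellM_eq] at hθ2 hβ2
  let b : (Fin d → ℝ) × ℝ → ℝ := fun p => β p.1 p.2
  let t : (Fin d → ℝ) × ℝ → ℝ := fun p => θ p.1 p.2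
  have hb : MemLp b 2 (cellM d) :=
    (memLp_two_iff_integrable_sq hβm.aestronglyMeasurable).2 hβ2
  have ht : MemLp t 2 (cellM d) :=
    (memLp_two_iff_integrable_sq hθm.aestronglyMeasurable).2 hθ2
  let W : (Fin d → ℝ) × ((Fin d → ℝ) × ℝ) → ℝ := fun q => μ q.2.1 (q.2.1 + q.1) q.2.2
  have hW : Measurable W := hμmeas.comp
    (measurable_snd.fst.prodMk ((measurable_snd.fst.add measurable_fst).prodMk measurable_snd.snd))
  have hWM : ∀ q, |W q| ≤ μp := fun q => by
    rw [abs_of_nonneg (hμm.le.trans (hμlo _ _ _))]; exact hμhi _ _ _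
  have hWf : ∀ q, W (-q.1, sh q.1 q.2) = W q := by
    rintro ⟨z, p⟩
    simp only [W, sh]
    have h := per_frac (fun x => μ x (x + -z) p.2) (fun x k => by
      rw [add_right_comm, hμ1, hμ2]) (p.1 + z)
    rw [h, hμs]
    simp
  let F : (Fin d → ℝ) × ℝ → ℝ := fun p => ∫ z, W (z, p) * Df b (z, p) ∂(jumpM a)
  have hWD := WDf_memLp (jumpM a) b hb W hW μp hWM
  have hWDi := hWD.integrable one_le_two
  have hF : Integrable F (cellM d) := hWDi.integral_prod_right
  have hode' : ∀ᵐ ξ ∂(cubeM d), ∀ s ∈ Set.Icc (0:ℝ) 1,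
      b (ξ, s) = b (ξ, 0) + ∫ τ in (0:ℝ)..s, (F (ξ, τ) + t (ξ, τ)) := by
    filter_upwards [ae_restrict_of_ae hode] with ξ h s hs
    have h' := h s hs
    simp only [Aop_eq a hameas hanonneg hasymm μ β hβper] at h'
    exact h'
  have hFχ : ∀ χ : ℝ → ℝ, Measurable χ → (∀ s, |χ s| ≤ 1) →
      ∫ p, χ p.2 * F p ∂(cellM d) = 0 := by
    intro χ hχ hχ1
    have h0 := mean_zero (jumpM a) hα b hβm hβper W hW hWf χ hχ
    have hi : Integrable (fun q => χ q.2.2 * (W q * Df b q)) ((jumpM a).prod (cellM d)) :=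
      hWDi.bdd_mul (c := 1) (hχ.comp measurable_snd.snd).aestronglyMeasurable
        (ae_of_all _ fun q => hχ1 _)
    rw [integral_prod_symm _ hi] at h0
    simpa only [integral_const_mul] using h0
  have hmb := mean_bound b F t hb hF ht hFχ hode' hβ0
  have hbWDi : Integrable (fun q => b q.2 * (W q * Df b q)) ((jumpM a).prod (cellM d)) :=
    (memLp_snd (jumpM a) b hb).integrable_mul hWD
  have hbFi : Integrable (fun p => b p * F p) (cellM d) := by
    have h := hbWDi.integral_prod_right
    simpa only [integral_const_mul] using h
  have hbF : ∫ q, b q.2 * (W q * Df b q) ∂((jumpM a).prod (cellM d)) =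
      ∫ p, b p * F p ∂(cellM d) := by
    rw [integral_prod_symm _ hbWDi]
    simp only [integral_const_mul, F]
  have hbti : Integrable (fun p => b p * t p) (cellM d) := hb.integrable_mul ht
  have hsum : (∫ p, b p * F p ∂(cellM d)) + ∫ p, b p * t p ∂(cellM d) = 0 := by
    rw [← integral_add hbFi hbti]
    have hi : Integrable (fun p => b p * F p + b p * t p) (cellM d) := hbFi.add hbti
    have e : ∫ p, (b p * F p + b p * t p) ∂(cellM d) =
        ∫ ξ, ∫ s, (b (ξ, s) * F (ξ, s) + b (ξ, s) * t (ξ, s)) ∂timeM ∂(cubeM d) :=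
      integral_prod (μ := cubeM d) (ν := timeM) _ hi
    rw [e]
    have hFt : Integrable (fun p => F p + t p) (cellM d) := hF.add (ht.integrable one_le_two)
    have hfξ : ∀ᵐ ξ ∂(cubeM d), Integrable (fun s => F (ξ, s) + t (ξ, s)) timeM :=
      Integrable.prod_right_ae (μ := cubeM d) (ν := timeM) hFt
    apply integral_eq_zero_of_ae
    filter_upwards [hode', hfξ] with ξ h1 h2
    have h3 := ode_zero (fun s => b (ξ, s)) (fun s => F (ξ, s) + t (ξ, s)) h2 h1 (by
      have := hβt ξ 0
      simpa [b] using this)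
    simp only [mul_add] at h3
    exact h3
  have hen := energy (jumpM a) hα b hβm hb hβper W hW μp hWM hWf
  rw [hbF] at hen
  have hD2 : Integrable (fun q => (Df b q) ^ 2) ((jumpM a).prod (cellM d)) :=
    (Df_memLp (jumpM a) b hb).integrable_sq
  have hlow : μm * ∫ q, (Df b q) ^ 2 ∂((jumpM a).prod (cellM d)) ≤
      ∫ q, W q * (Df b q) ^ 2 ∂((jumpM a).prod (cellM d)) := by
    rw [← integral_const_mul]
    refine integral_mono (hD2.const_mul _)
      (hD2.bdd_mul (c := μp) hW.aestronglyMeasurable (ae_of_all _ fun q => hWM q)) fun q => ?_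
    exact mul_le_mul_of_nonneg_right (hμlo _ _ _) (sq_nonneg _)
  have hcs := cs_ineq (cellM d) b t hb ht
  have hpo := hP b hβm hb hβper
  set x := √(∫ p, b p ^ 2 ∂(cellM d)) with hx
  set y := √(∫ p, t p ^ 2 ∂(cellM d)) with hy
  have hx2 : x ^ 2 = ∫ p, b p ^ 2 ∂(cellM d) :=
    Real.sq_sqrt (integral_nonneg fun p => sq_nonneg _)
  have hb1 : ∫ p, |b p| ∂(cellM d) ≤ x := by
    have h := cs_ineq (cellM d) (fun p => |b p|) (fun _ => (1:ℝ)) hb.abs (memLp_const 1)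
    simp only [mul_one, sq_abs, one_pow, integral_const, probReal_univ, smul_eq_mul,
      Real.sqrt_one] at h
    exact (le_abs_self _).trans h
  have hy0 : 0 ≤ y := Real.sqrt_nonneg _
  have hmean : ∫ p, b p * (∫ η, b (η, p.2) ∂(cubeM d)) ∂(cellM d) ≤ x * y := by
    have hae : ∀ᵐ p ∂(cellM d), |∫ η, b (η, p.2) ∂(cubeM d)| ≤ y :=
      Measure.quasiMeasurePreserving_snd.ae hmb
    have h := norm_integral_le_of_norm_le (μ := cellM d)
      (f := fun p => b p * (∫ η, b (η, p.2) ∂(cubeM d))) (g := fun p => |b p| * y)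
      ((hb.integrable one_le_two).abs.mul_const y) (by
        filter_upwards [hae] with p hp
        rw [norm_mul]
        exact mul_le_mul_of_nonneg_left hp (abs_nonneg _))
    rw [integral_mul_const] at h
    exact (le_abs_self _).trans (h.trans (mul_le_mul_of_nonneg_right hb1 hy0))
  refine final_est C μm x y hC hμm (Real.sqrt_nonneg _) hy0
    (∫ q, (Df b q) ^ 2 ∂((jumpM a).prod (cellM d))) ?_ ?_
  · rw [hx2]; linarith
  · have := le_abs_self (∫ p, b p * t p ∂(cellM d))
    linarith
end
end

section
/- The integral operator K from L²(𝕋^{d+1}) to L²(𝕋^d) defined by (KΨ)(ξ) = ∫₀¹ ∫_{ℝ^d} a(ξ−η) μ(ξ,η,s) exp(∫₀^s (G(ξ,τ) − G(η,τ)) dτ) Ψ(η,s) dη ds is a compact operator, and its operator norm does not exceed μ⁺ e^{μ⁺}. -/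
open MeasureTheory

noncomputable section

/-- The periodic reduction of a point of `ℝ^d` to the cell `[0,1)^d`. -/
def fract {d : ℕ} (x : Fin d → ℝ) : Fin d → ℝ := fun i => Int.fract (x i)

/-- `G(ξ,s) = ∫_{ℝ^d} a(ξ-η) μ(ξ,η,s) dη`. -/
def Gfun {d : ℕ} (a : (Fin d → ℝ) → ℝ) (μ : (Fin d → ℝ) → (Fin d → ℝ) → ℝ → ℝ)
    (ξ : Fin d → ℝ) (s : ℝ) : ℝ :=
  ∫ η, a (ξ - η) * μ ξ η s

section abstractKernel
set_option linter.unusedSectionVars false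
set_option linter.unusedVariables false
open scoped ENNReal NNReal

variable {X Y : Type*} [MeasurableSpace X] [MeasurableSpace Y]

lemma cs_sq {α : Type*} [MeasurableSpace α] (m : Measure α) {f g : α → ℝ≥0∞}
    (hf : AEMeasurable f m) (hg : AEMeasurable g m) :
    (∫⁻ x, f x * g x ∂m) ^ 2 ≤ (∫⁻ x, f x ^ 2 ∂m) * ∫⁻ x, g x ^ 2 ∂m := by
  have h := ENNReal.lintegral_mul_le_Lp_mul_Lq m Real.HolderConjugate.two_two hf hg
  have h2 := pow_le_pow_left' h 2
  refine h2.trans (le_of_eq ?_)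
  rw [mul_pow, ← ENNReal.rpow_natCast, ← ENNReal.rpow_natCast, ← ENNReal.rpow_mul,
    ← ENNReal.rpow_mul]
  norm_num

lemma eLpNorm_two_sq' {α : Type*} [MeasurableSpace α] (m : Measure α) (f : α → ℝ) :
    eLpNorm f 2 m ^ 2 = ∫⁻ x, ‖f x‖ₑ ^ 2 ∂m := by
  rw [eLpNorm_eq_lintegral_rpow_enorm_toReal (by norm_num) (by norm_num)]
  rw [← ENNReal.rpow_natCast, ← ENNReal.rpow_mul]
  norm_num

/-- Bound for kernel `k` on `L²`. -/
def HK (m : Measure X) (n : Measure Y) (k : X × Y → ℝ) (C : ℝ≥0) : Prop :=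
  ∀ g : Y → ℝ≥0∞, Measurable g →
    ∫⁻ x, (∫⁻ y, ‖k (x, y)‖ₑ * g y ∂n) ^ 2 ∂m ≤ (C : ℝ≥0∞) ^ 2 * ∫⁻ y, g y ^ 2 ∂n

variable {m : Measure X} {n : Measure Y} [SFinite m] [SFinite n]

lemma HK.schur {k : X × Y → ℝ} {C : ℝ≥0} (hk : Measurable k)
    (h1 : ∀ᵐ x ∂m, ∫⁻ y, ‖k (x, y)‖ₑ ∂n ≤ C) (h2 : ∀ᵐ y ∂n, ∫⁻ x, ‖k (x, y)‖ₑ ∂m ≤ C) :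
    HK m n k C := by
  intro g hg
  have hke : Measurable fun p => ‖k p‖ₑ := hk.enorm
  have step : ∀ᵐ x ∂m, (∫⁻ y, ‖k (x, y)‖ₑ * g y ∂n) ^ 2 ≤
      C * ∫⁻ y, ‖k (x, y)‖ₑ * g y ^ 2 ∂n := by
    filter_upwards [h1] with x hx
    have hm : Measurable fun y => ‖k (x, y)‖ₑ := hke.comp measurable_prodMk_left
    have h := cs_sq n (f := fun y => ‖k (x, y)‖ₑ ^ (1 / 2 : ℝ))
      (g := fun y => ‖k (x, y)‖ₑ ^ (1 / 2 : ℝ) * g y)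
      (hm.pow_const _).aemeasurable ((hm.pow_const _).mul hg).aemeasurable
    have e : ∀ t : ℝ≥0∞, t ^ (1 / 2 : ℝ) * t ^ (1 / 2 : ℝ) = t := by
      intro t
      rw [← ENNReal.rpow_add_of_nonneg _ _ (by norm_num) (by norm_num)]
      norm_num
    have e2 : ∀ t : ℝ≥0∞, (t ^ (1 / 2 : ℝ)) ^ 2 = t := by
      intro t; rw [pow_two, e]
    simp only [← mul_assoc, e, mul_pow, e2] at h
    exact h.trans (by gcongr)
  calc _ ≤ ∫⁻ x, C * ∫⁻ y, ‖k (x, y)‖ₑ * g y ^ 2 ∂n ∂m := lintegral_mono_ae step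
    _ = C * ∫⁻ x, ∫⁻ y, ‖k (x, y)‖ₑ * g y ^ 2 ∂n ∂m := lintegral_const_mul' _ _ (by simp)
    _ = C * ∫⁻ y, ∫⁻ x, ‖k (x, y)‖ₑ * g y ^ 2 ∂m ∂n := by
        rw [lintegral_lintegral_swap]
        exact (hke.mul ((hg.comp measurable_snd).pow_const 2)).aemeasurable
    _ = C * ∫⁻ y, (∫⁻ x, ‖k (x, y)‖ₑ ∂m) * g y ^ 2 ∂n := by
        congr 1
        refine lintegral_congr fun y => ?_
        rw [lintegral_mul_const]
        exact hke.comp measurable_prodMk_right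
    _ ≤ C * ∫⁻ y, C * g y ^ 2 ∂n := by
        refine mul_le_mul_right (lintegral_mono_ae ?_) _
        filter_upwards [h2] with y hy
        gcongr
    _ = _ := by
        rw [lintegral_const_mul' _ _ (by simp), ← mul_assoc, pow_two]

lemma HK.hs {k : X × Y → ℝ} {C : ℝ≥0} (hk : Measurable k)
    (h : ∫⁻ p, ‖k p‖ₑ ^ 2 ∂(m.prod n) ≤ (C : ℝ≥0∞) ^ 2) : HK m n k C := by
  intro g hg
  have hke : Measurable fun p => ‖k p‖ₑ := hk.enorm
  calc _ ≤ ∫⁻ x, (∫⁻ y, ‖k (x, y)‖ₑ ^ 2 ∂n) * ∫⁻ y, g y ^ 2 ∂n ∂m := by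
        refine lintegral_mono fun x => ?_
        exact cs_sq n (hke.comp measurable_prodMk_left).aemeasurable hg.aemeasurable
    _ = (∫⁻ x, (∫⁻ y, ‖k (x, y)‖ₑ ^ 2 ∂n) ∂m) * ∫⁻ y, g y ^ 2 ∂n := by
        rw [lintegral_mul_const]
        exact Measurable.lintegral_prod_right' (f := fun p => ‖k p‖ₑ ^ 2) (hke.pow_const 2)
    _ ≤ _ := by
        gcongr
        rw [← lintegral_prod (fun p => ‖k p‖ₑ ^ 2) (hke.pow_const 2).aemeasurable]
        exact h

lemma HK.integrable {k : X × Y → ℝ} {C : ℝ≥0} (hk : Measurable k) (h : HK m n k C)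
    (Ψ : Lp ℝ 2 n) : ∀ᵐ x ∂m, Integrable (fun y => k (x, y) * Ψ y) n := by
  have hΨ : Measurable Ψ := (Lp.stronglyMeasurable Ψ).measurable
  have h1 := h (fun y => ‖Ψ y‖ₑ) hΨ.enorm
  rw [← eLpNorm_two_sq'] at h1
  have h2 : ∫⁻ x, (∫⁻ y, ‖k (x, y)‖ₑ * ‖Ψ y‖ₑ ∂n) ^ 2 ∂m ≠ ∞ := by
    refine ne_top_of_le_ne_top ?_ h1
    have := Lp.eLpNorm_ne_top Ψ
    finiteness
  have hmeas : Measurable fun x => (∫⁻ y, ‖k (x, y)‖ₑ * ‖Ψ y‖ₑ ∂n) :=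
    Measurable.lintegral_prod_right' (f := fun p : X × Y => ‖k p‖ₑ * ‖Ψ p.2‖ₑ)
      (hk.enorm.mul (hΨ.comp measurable_snd).enorm)
  filter_upwards [ae_lt_top (hmeas.pow_const 2) h2] with x hx
  refine ⟨((hk.comp measurable_prodMk_left).mul hΨ).aestronglyMeasurable, ?_⟩
  rw [hasFiniteIntegral_iff_enorm]
  simp only [enorm_mul]
  by_contra hc
  simp only [not_lt, top_le_iff] at hc
  simp [hc] at hx

lemma HK.eLpNorm_le {k : X × Y → ℝ} {C : ℝ≥0} (h : HK m n k C)
    (Ψ : Lp ℝ 2 n) : eLpNorm (fun x => ∫ y, k (x, y) * Ψ y ∂n) 2 m ≤ C * eLpNorm Ψ 2 n := by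
  have hΨ : Measurable Ψ := (Lp.stronglyMeasurable Ψ).measurable
  have h1 := h (fun y => ‖Ψ y‖ₑ) hΨ.enorm
  rw [← eLpNorm_two_sq', ← mul_pow] at h1
  have h2 : eLpNorm (fun x => ∫ y, k (x, y) * Ψ y ∂n) 2 m ^ 2 ≤ (C * eLpNorm Ψ 2 n) ^ 2 := by
    rw [eLpNorm_two_sq']
    refine le_trans (lintegral_mono fun x => ?_) h1
    gcongr
    refine (enorm_integral_le_lintegral_enorm _).trans ?_
    simp only [enorm_mul, le_refl]
  exact (ENNReal.pow_le_pow_left_iff (by norm_num)).1 h2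

lemma HK.memLp {k : X × Y → ℝ} {C : ℝ≥0} (hk : Measurable k) (h : HK m n k C)
    (Ψ : Lp ℝ 2 n) : MemLp (fun x => ∫ y, k (x, y) * Ψ y ∂n) 2 m := by
  have hΨ : Measurable Ψ := (Lp.stronglyMeasurable Ψ).measurable
  constructor
  · have : StronglyMeasurable fun p : X × Y => k p * Ψ p.2 :=
      (hk.mul (hΨ.comp measurable_snd)).stronglyMeasurable
    exact (StronglyMeasurable.integral_prod_right' this).aestronglyMeasurable
  · refine (h.eLpNorm_le Ψ).trans_lt ?_
    have := Lp.eLpNorm_ne_top Ψ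
    finiteness

/-- `T` is the integral operator with kernel `k`. -/
def IsOp (k : X × Y → ℝ) (T : Lp ℝ 2 n →L[ℝ] Lp ℝ 2 m) : Prop :=
  ∀ Ψ : Lp ℝ 2 n, T Ψ =ᵐ[m] fun x => ∫ y, k (x, y) * Ψ y ∂n

lemma HK.exists_op {k : X × Y → ℝ} {C : ℝ≥0} (hk : Measurable k) (h : HK m n k C) :
    ∃ T : Lp ℝ 2 n →L[ℝ] Lp ℝ 2 m, ‖T‖ ≤ C ∧ IsOp k T := by
  let L : Lp ℝ 2 n →ₗ[ℝ] Lp ℝ 2 m :=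
    { toFun := fun Ψ => (h.memLp hk Ψ).toLp
      map_add' := by
        intro Ψ Φ
        apply Lp.ext
        refine (MemLp.coeFn_toLp _).trans ?_
        refine Filter.EventuallyEq.trans ?_ (Lp.coeFn_add _ _).symm
        filter_upwards [h.integrable hk Ψ, h.integrable hk Φ, (h.memLp hk Ψ).coeFn_toLp,
          (h.memLp hk Φ).coeFn_toLp] with x h1 h2 h3 h4
        rw [Pi.add_apply, h3, h4, ← integral_add h1 h2]
        refine integral_congr_ae ?_
        filter_upwards [Lp.coeFn_add Ψ Φ] with y hy
        rw [hy, Pi.add_apply, mul_add]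
      map_smul' := by
        intro c Ψ
        apply Lp.ext
        refine (MemLp.coeFn_toLp _).trans ?_
        refine Filter.EventuallyEq.trans ?_ (Lp.coeFn_smul _ _).symm
        filter_upwards [(h.memLp hk Ψ).coeFn_toLp] with x h3
        simp only [RingHom.id_apply, Pi.smul_apply]
        rw [h3, ← integral_smul]
        refine integral_congr_ae ?_
        filter_upwards [Lp.coeFn_smul c Ψ] with y hy
        rw [hy, Pi.smul_apply, smul_eq_mul, smul_eq_mul]; ring }
  refine ⟨L.mkContinuous C ?_, LinearMap.mkContinuous_norm_le _ (by simp) _, ?_⟩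
  · intro Ψ
    change ‖(h.memLp hk Ψ).toLp‖ ≤ _
    rw [Lp.norm_toLp, Lp.norm_def]
    have := ENNReal.toReal_mono ?_ (h.eLpNorm_le Ψ)
    · simpa using this
    · have := Lp.eLpNorm_ne_top Ψ
      finiteness
  · intro Ψ
    exact (h.memLp hk Ψ).coeFn_toLp

lemma IsOp.unique {k : X × Y → ℝ} {T T' : Lp ℝ 2 n →L[ℝ] Lp ℝ 2 m} (h : IsOp k T)
    (h' : IsOp k T') : T = T' := by
  ext1 Ψ
  have e := (h' Ψ).symm
  exact Lp.ext ((h Ψ).trans e)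

/-- compact kernels -/
def CK (m : Measure X) (n : Measure Y) (k : X × Y → ℝ) : Prop :=
  Measurable k ∧ (∃ C, HK m n k C) ∧ ∃ T : Lp ℝ 2 n →L[ℝ] Lp ℝ 2 m,
    IsOp k T ∧ IsCompactOperator T

lemma HK.of_le {k k' : X × Y → ℝ} {C : ℝ≥0} (h : HK m n k C) (hl : ∀ p, ‖k' p‖ ≤ ‖k p‖) :
    HK m n k' C := by
  intro g hg
  refine le_trans ?_ (h g hg)
  gcongr
  exact enorm_le_iff_norm_le.2 (hl _)

lemma HK.const_mul {k : X × Y → ℝ} {C : ℝ≥0} (h : HK m n k C) (c : ℝ) :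
    HK m n (fun p => c * k p) (‖c‖₊ * C) := by
  intro g hg
  simp only [enorm_mul, mul_assoc]
  simp_rw [lintegral_const_mul' ‖c‖ₑ _ (by simp), mul_pow]
  rw [lintegral_const_mul' _ _ (by finiteness), ENNReal.coe_mul, mul_pow, mul_assoc]
  exact mul_le_mul_right (h g hg) _

lemma HK.add {k k' : X × Y → ℝ} {C C' : ℝ≥0} (hk : Measurable k) (hk' : Measurable k')
    (h : HK m n k C) (h' : HK m n k' C') :
    HK m n (fun p => k p + k' p) (2 * (C + C')) := by
  intro g hg
  have ma : ∀ k : X × Y → ℝ, Measurable k → Measurable fun x => ∫⁻ y, ‖k (x, y)‖ₑ * g y ∂n :=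
    fun k hk => Measurable.lintegral_prod_right' (f := fun p : X × Y => ‖k p‖ₑ * g p.2)
      (hk.enorm.mul (hg.comp measurable_snd))
  calc _ ≤ ∫⁻ x, (∫⁻ y, ‖k (x, y)‖ₑ * g y ∂n + ∫⁻ y, ‖k' (x, y)‖ₑ * g y ∂n) ^ 2 ∂m := by
        gcongr with x
        rw [← lintegral_add_left]
        · gcongr with y
          rw [← add_mul]
          gcongr
          exact enorm_add_le _ _
        · exact (hk.comp measurable_prodMk_left).enorm.mul hg
    _ ≤ ∫⁻ x, (2 * (∫⁻ y, ‖k (x, y)‖ₑ * g y ∂n) ^ 2 + 2 * (∫⁻ y, ‖k' (x, y)‖ₑ * g y ∂n) ^ 2) ∂m := by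
        gcongr with x
        have := ENNReal.rpow_add_le_mul_rpow_add_rpow (∫⁻ y, ‖k (x, y)‖ₑ * g y ∂n)
          (∫⁻ y, ‖k' (x, y)‖ₑ * g y ∂n) (p := 2) (by norm_num)
        norm_num at this
        rw [← mul_add]
        simpa using this
    _ = 2 * (∫⁻ x, (∫⁻ y, ‖k (x, y)‖ₑ * g y ∂n) ^ 2 ∂m) +
          2 * (∫⁻ x, (∫⁻ y, ‖k' (x, y)‖ₑ * g y ∂n) ^ 2 ∂m) := by
        rw [lintegral_add_left (((ma k hk).pow_const 2).const_mul 2),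
          lintegral_const_mul' _ _ (by simp), lintegral_const_mul' _ _ (by simp)]
    _ ≤ 2 * ((C : ℝ≥0∞) ^ 2 * ∫⁻ y, g y ^ 2 ∂n) + 2 * ((C' : ℝ≥0∞) ^ 2 * ∫⁻ y, g y ^ 2 ∂n) := by
        gcongr
        · exact h g hg
        · exact h' g hg
    _ = ((2 * (C ^ 2 + C' ^ 2) : ℝ≥0) : ℝ≥0∞) * ∫⁻ y, g y ^ 2 ∂n := by
        push_cast; ring
    _ ≤ _ := by
        gcongr
        rw [← ENNReal.coe_pow]
        gcongr
        have := C.2; have := C'.2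
        have : 0 ≤ C * C' := by positivity
        have h3 : (2 * (C + C')) ^ 2 = 2 * (C ^ 2 + C' ^ 2) + (2 * C ^ 2 + 2 * C' ^ 2 + 8 * (C * C')) := by
          ring
        rw [h3]
        exact le_self_add

lemma CK.const_mul {k : X × Y → ℝ} (h : CK m n k) (c : ℝ) : CK m n (fun p => c * k p) := by
  obtain ⟨hk, ⟨C, hC⟩, T, hT, hc⟩ := h
  refine ⟨hk.const_mul c, ⟨_, hC.const_mul c⟩, c • T, ?_, hc.smul c⟩
  intro Ψ
  refine (Lp.coeFn_smul c (T Ψ)).trans ?_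
  filter_upwards [hT Ψ] with x hx
  rw [Pi.smul_apply, hx, ← integral_smul]
  simp only [smul_eq_mul, mul_assoc]

lemma CK.add {k k' : X × Y → ℝ} (h : CK m n k) (h' : CK m n k') :
    CK m n (fun p => k p + k' p) := by
  obtain ⟨hk, ⟨C, hC⟩, T, hT, hc⟩ := h
  obtain ⟨hk', ⟨C', hC'⟩, T', hT', hc'⟩ := h'
  refine ⟨hk.add hk', ⟨_, hC.add hk hk' hC'⟩, T + T', ?_, hc.add hc'⟩
  intro Ψ
  refine (Lp.coeFn_add (T Ψ) (T' Ψ)).trans ?_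
  filter_upwards [hT Ψ, hT' Ψ, hC.integrable hk Ψ, hC'.integrable hk' Ψ] with x hx hx' hi hi'
  rw [Pi.add_apply, hx, hx', ← integral_add hi hi']
  simp only [add_mul]

lemma CK.sub {k k' : X × Y → ℝ} (h : CK m n k) (h' : CK m n k') :
    CK m n (fun p => k p - k' p) := by
  have := h.add (h'.const_mul (-1))
  simpa [sub_eq_add_neg] using this

lemma CK.limit {k : X × Y → ℝ} (hk : Measurable k) {C : ℝ≥0} (hC : HK m n k C)
    (h : ∀ ε : ℝ≥0, 0 < ε → ∃ k', CK m n k' ∧ HK m n (fun p => k p - k' p) ε) : CK m n k := by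
  obtain ⟨T, -, hT⟩ := hC.exists_op hk
  refine ⟨hk, ⟨C, hC⟩, T, hT, ?_⟩
  have hcl : IsClosed {f : Lp ℝ 2 n →L[ℝ] Lp ℝ 2 m | IsCompactOperator f} :=
    isClosed_setOfPred_isCompactOperator
  refine hcl.closure_subset_iff.2 (le_refl _) (Metric.mem_closure_iff.2 ?_)
  intro ε hε
  obtain ⟨k', ⟨hk', ⟨C', hC'⟩, T', hT', hc'⟩, hd⟩ := h (Real.toNNReal (ε / 2))
    (by simpa using hε)
  refine ⟨T', hc', ?_⟩
  obtain ⟨S, hS, hS'⟩ := hd.exists_op (hk.sub hk')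
  have : S = T - T' := by
    refine hS'.unique ?_
    intro Ψ
    refine (Lp.coeFn_sub (T Ψ) (T' Ψ)).trans ?_
    filter_upwards [hT Ψ, hT' Ψ, hC.integrable hk Ψ, hC'.integrable hk' Ψ] with x hx hx' hi hi'
    rw [Pi.sub_apply, hx, hx', ← integral_sub hi hi']
    simp only [Pi.sub_apply, sub_mul]
  rw [dist_eq_norm, ← this]
  refine hS.trans_lt ?_
  rw [Real.coe_toNNReal _ (by positivity)]
  linarith


lemma CK.congr {k k' : X × Y → ℝ} (h : CK m n k) (e : ∀ p, k p = k' p) : CK m n k' := by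
  have : k = k' := funext e
  rwa [← this]

variable [IsFiniteMeasure m] [IsFiniteMeasure n]

lemma HK.indicator {E : Set (X × Y)} (hE : MeasurableSet E) {C : ℝ≥0}
    (h : (m.prod n) E ≤ (C : ℝ≥0∞) ^ 2) :
    HK m n (E.indicator fun _ => (1 : ℝ)) C := by
  apply HK.hs (measurable_const.indicator hE)
  refine le_trans (le_of_eq ?_) h
  rw [← lintegral_indicator_one hE]
  refine lintegral_congr fun p => ?_
  by_cases hp : p ∈ E <;> simp [hp]

lemma HK.indicator' {E : Set (X × Y)} (hE : MeasurableSet E) :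
    ∃ C, HK m n (E.indicator fun _ => (1 : ℝ)) C := by
  refine ⟨(((m.prod n) E).toNNReal + 1), HK.indicator hE ?_⟩
  have h1 : (m.prod n) E = (((m.prod n) E).toNNReal : ℝ≥0∞) :=
    (ENNReal.coe_toNNReal (measure_ne_top _ _)).symm
  rw [h1, ENNReal.toNNReal_coe]
  generalize ((m.prod n) E).toNNReal = t
  norm_cast
  have h3 : (t + 1) ^ 2 = t + (t ^ 2 + t + 1) := by ring
  rw [h3]
  exact le_self_add

lemma CK.rect {A : Set X} {B : Set Y} (hA : MeasurableSet A) (hB : MeasurableSet B) :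
    CK m n ((A ×ˢ B).indicator fun _ => (1 : ℝ)) := by
  refine ⟨measurable_const.indicator (hA.prod hB), HK.indicator' (hA.prod hB),
    (ContinuousLinearMap.toSpanSingleton ℝ
      (indicatorConstLp 2 hA (measure_ne_top m A) (1 : ℝ))).comp
      (innerSL ℝ (indicatorConstLp 2 hB (measure_ne_top n B) (1 : ℝ))), ?_, ?_⟩
  · intro Ψ
    simp only [ContinuousLinearMap.comp_apply, ContinuousLinearMap.toSpanSingleton_apply,
      innerSL_apply_apply]
    rw [L2.inner_indicatorConstLp_one]
    refine (Lp.coeFn_smul _ _).trans ?_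
    filter_upwards [indicatorConstLp_coeFn (p := 2) (hs := hA) (hμs := measure_ne_top m A)
      (c := (1 : ℝ))] with x hx
    rw [Pi.smul_apply, hx]
    by_cases hxA : x ∈ A
    · rw [Set.indicator_of_mem hxA, smul_eq_mul, mul_one, ← integral_indicator hB]
      refine integral_congr_ae (Filter.Eventually.of_forall fun y => ?_)
      by_cases hy : y ∈ B <;> simp [hy, hxA]
    · simp [hxA]
  · exact IsCompactOperator.comp_clm (isCompactOperator_of_locallyCompactSpace_rng
      (ContinuousLinearMap.toSpanSingleton ℝ
        (indicatorConstLp 2 hA (measure_ne_top m A) (1 : ℝ)))) _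

lemma CK.set {E : Set (X × Y)} (hE : MeasurableSet E) :
    CK m n (E.indicator fun _ => (1 : ℝ)) := by
  induction E, hE using MeasurableSpace.induction_on_inter generateFrom_prod.symm
    isPiSystem_prod with
  | empty =>
    have := CK.rect (m := m) (n := n) (A := ∅) (B := ∅) MeasurableSet.empty MeasurableSet.empty
    simpa using this
  | basic t ht =>
    obtain ⟨A, hA, B, hB, rfl⟩ := ht
    exact CK.rect hA hB
  | compl t ht ih =>
    have h1 := CK.rect (m := m) (n := n) MeasurableSet.univ MeasurableSet.univ
    refine (h1.sub ih).congr fun p => ?_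
    by_cases hp : p ∈ t <;> simp [hp]
  | iUnion f hd hf ih =>
    obtain ⟨C, hC⟩ := HK.indicator' (m := m) (n := n) (MeasurableSet.iUnion hf)
    refine CK.limit (measurable_const.indicator (MeasurableSet.iUnion hf)) hC ?_
    intro ε hε
    have hfin : ∀ N : ℕ, CK m n ((⋃ i < N, f i).indicator fun _ => (1 : ℝ)) := by
      intro N
      induction N with
      | zero =>
        have := CK.rect (m := m) (n := n) (A := ∅) (B := ∅) MeasurableSet.empty
          MeasurableSet.empty
        simpa using this
      | succ N ihN =>
        refine (ihN.add (ih N)).congr fun p => ?_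
        have hdis : Disjoint (⋃ i < N, f i) (f N) := by
          simp only [Set.disjoint_iUnion_left]
          intro i hi
          exact hd hi.ne
        rw [Set.biUnion_lt_succ]
        exact (congrFun (Set.indicator_union_of_disjoint hdis (fun _ => (1 : ℝ))) p).symm
    have hmN : ∀ N : ℕ, MeasurableSet (⋃ i < N, f i) := fun N =>
      MeasurableSet.iUnion fun i => MeasurableSet.iUnion fun _ => hf i
    have htend : Filter.Tendsto (fun N : ℕ => (m.prod n) ((⋃ i, f i) \ ⋃ i < N, f i))
        Filter.atTop (nhds 0) := by
      have hanti : Antitone fun N : ℕ => ((⋃ i, f i) \ ⋃ i < N, f i) := by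
        intro a b hab
        refine Set.sdiff_subset_sdiff_right ?_
        exact Set.biUnion_subset_biUnion_left fun i hi => lt_of_lt_of_le hi hab
      have h0 := tendsto_measure_iInter_atTop (μ := m.prod n)
        (fun N => ((MeasurableSet.iUnion hf).diff (hmN N)).nullMeasurableSet) hanti
        ⟨0, measure_ne_top _ _⟩
      have he : (⋂ N : ℕ, ((⋃ i, f i) \ ⋃ i < N, f i)) = ∅ := by
        ext p
        simp only [Set.mem_iInter, Set.mem_sdiff, Set.mem_iUnion, Set.mem_empty_iff_false,
          iff_false]
        intro h
        obtain ⟨i, hi⟩ := (h 0).1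
        exact (h (i + 1)).2 ⟨i, Nat.lt_succ_self i, hi⟩
      rw [he, measure_empty] at h0
      exact h0
    have hpos : (0 : ℝ≥0∞) < (ε : ℝ≥0∞) ^ 2 := by positivity
    obtain ⟨N, hN⟩ := (htend.eventually_lt_const hpos).exists
    refine ⟨_, hfin N, ?_⟩
    refine (HK.indicator ((MeasurableSet.iUnion hf).diff (hmN N)) hN.le).of_le ?_
    intro p
    have hsub : (⋃ i < N, f i) ⊆ ⋃ i, f i :=
      Set.iUnion_subset fun i => Set.iUnion_subset fun _ => Set.subset_iUnion f i
    by_cases h1 : p ∈ ⋃ i < N, f i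
    · simp only [Set.indicator_of_mem h1, Set.indicator_of_mem (hsub h1), sub_self, norm_zero]
      exact norm_nonneg _
    · by_cases h2 : p ∈ ⋃ i, f i
      · rw [Set.indicator_of_mem h2, Set.indicator_of_notMem h1, Set.indicator_of_mem (Set.mem_sdiff_of_mem h2 h1)]
        simp
      · rw [Set.indicator_of_notMem h2, Set.indicator_of_notMem h1]
        simp

lemma CK.simple (f : SimpleFunc (X × Y) ℝ) : CK m n f := by
  induction f using SimpleFunc.induction with
  | const c hs =>
    refine ((CK.set hs).const_mul c).congr fun p => ?_
    classical
    simp only [SimpleFunc.coe_piecewise, SimpleFunc.coe_const]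
    simp [Set.indicator_apply]
  | add _ h1 h2 =>
    exact (h1.add h2).congr fun p => rfl

lemma CK.of_bounded {k : X × Y → ℝ} (hk : Measurable k) {M : ℝ} (hM : ∀ p, ‖k p‖ ≤ M) :
    CK m n k := by
  have hL : MemLp k 2 (m.prod n) :=
    MemLp.of_bound hk.aestronglyMeasurable M (Filter.Eventually.of_forall hM)
  have hC : HK m n k (eLpNorm k 2 (m.prod n)).toNNReal := by
    apply HK.hs hk
    rw [← eLpNorm_two_sq', ENNReal.coe_toNNReal hL.2.ne]
  refine CK.limit hk hC ?_
  intro ε hε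
  obtain ⟨f, hf, -⟩ := hL.exists_simpleFunc_eLpNorm_sub_lt (by norm_num)
    (ε := (ε : ℝ≥0∞)) (by simpa using hε.ne')
  refine ⟨f, CK.simple f, ?_⟩
  apply HK.hs (hk.sub f.measurable)
  change ∫⁻ p, ‖(k - f) p‖ₑ ^ 2 ∂(m.prod n) ≤ _
  rw [← eLpNorm_two_sq']
  gcongr

end abstractKernel

section concrete
open scoped ENNReal NNReal

variable {d : ℕ}

def kc (k : Fin d → ℤ) : Fin d → ℝ := fun i => (k i : ℝ)

lemma measurableSet_cube : MeasurableSet (cube d) :=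
  MeasurableSet.univ_pi fun _ => measurableSet_Ico

lemma mem_cube {x : Fin d → ℝ} : x ∈ cube d ↔ ∀ i, 0 ≤ x i ∧ x i < 1 := by
  simp [cube]

lemma fract_add_kc {x : Fin d → ℝ} (hx : x ∈ cube d) (k : Fin d → ℤ) : fract (x + kc k) = x := by
  ext i
  simp only [fract, kc, Pi.add_apply, Int.fract_add_intCast]
  exact Int.fract_eq_self.2 (mem_cube.1 hx i)

lemma fract_eq (x : Fin d → ℝ) : fract x = x + kc (fun i => -⌊x i⌋) := by
  ext i
  simp [fract, kc, Int.fract, sub_eq_add_neg]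

lemma measurable_fract' : Measurable (fract : (Fin d → ℝ) → _) :=
  measurable_pi_lambda _ fun i => _root_.measurable_fract.comp (measurable_pi_apply i)

lemma lintegral_unfold (f : (Fin d → ℝ) → ℝ≥0∞) :
    ∫⁻ x, f x = ∑' k : Fin d → ℤ, ∫⁻ x in cube d, f (x + kc k) := by
  have hS : ∀ k : Fin d → ℤ, MeasurableSet ((fun x => x + kc k) '' cube d) := fun k =>
    (MeasurableEquiv.addRight (kc k)).measurableEmbedding.measurableSet_image.2 measurableSet_cube
  have hfl : ∀ (k : Fin d → ℤ) x, x ∈ cube d → ∀ i, ⌊(x + kc k) i⌋ = k i := by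
    intro k x hx i
    rw [Int.floor_eq_iff]
    have := mem_cube.1 hx i
    simp only [Pi.add_apply, kc]
    constructor <;> linarith
  have hU : (⋃ k : Fin d → ℤ, (fun x => x + kc k) '' cube d) = Set.univ := by
    rw [Set.eq_univ_iff_forall]
    intro x
    refine Set.mem_iUnion.2 ⟨fun i => ⌊x i⌋, fract x, ?_, ?_⟩
    · exact mem_cube.2 fun i => ⟨Int.fract_nonneg _, Int.fract_lt_one _⟩
    · ext i
      simp [fract, kc]
  have hD : Pairwise (Function.onFun Disjoint
      fun k : Fin d → ℤ => (fun x => x + kc k) '' cube d) := by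
    intro k l hkl
    refine Set.disjoint_left.2 ?_
    rintro z ⟨x, hx, rfl⟩ ⟨y, hy, hxy⟩
    apply hkl
    ext i
    rw [← hfl k x hx i, ← hfl l y hy i]
    exact congrArg (fun v : Fin d → ℝ => ⌊v i⌋) hxy.symm
  rw [← setLIntegral_univ, ← hU, lintegral_iUnion hS hD]
  refine tsum_congr fun k => ?_
  exact (measurePreserving_add_right volume (kc k)).setLIntegral_comp_emb
    (MeasurableEquiv.addRight (kc k)).measurableEmbedding f (cube d) |>.symm

/-- periodization -/
def per (b : (Fin d → ℝ) → ℝ≥0∞) (z : Fin d → ℝ) : ℝ≥0∞ := ∑' k : Fin d → ℤ, b (z - kc k)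

lemma per_measurable {b : (Fin d → ℝ) → ℝ≥0∞} (hb : Measurable b) : Measurable (per b) :=
  Measurable.tsum fun _ => hb.comp (measurable_id.sub_const _)

lemma per_sub (b : (Fin d → ℝ) → ℝ≥0∞) (z : Fin d → ℝ) (l : Fin d → ℤ) :
    per b (z - kc l) = per b z := by
  unfold per
  rw [← (Equiv.addLeft l).tsum_eq (fun k => b (z - kc k))]
  refine tsum_congr fun k => ?_
  congr 1
  ext i
  simp [kc]; ring

lemma per_neg {b : (Fin d → ℝ) → ℝ≥0∞} (hb : ∀ z, b (-z) = b z) (z : Fin d → ℝ) :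
    per b (-z) = per b z := by
  unfold per
  rw [← (Equiv.neg (Fin d → ℤ)).tsum_eq (fun k => b (z - kc k))]
  refine tsum_congr fun k => ?_
  rw [← hb]
  congr 1
  ext i
  simp [kc]; ring

lemma push {b g : (Fin d → ℝ) → ℝ≥0∞} (hb : Measurable b) (hg : Measurable g) (ξ : Fin d → ℝ) :
    ∫⁻ η, b (ξ - η) * g (fract η) = ∫⁻ η in cube d, per b (ξ - η) * g η := by
  rw [lintegral_unfold]
  have h1 : ∀ k : Fin d → ℤ, ∫⁻ x in cube d, b (ξ - (x + kc k)) * g (fract (x + kc k)) =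
      ∫⁻ x in cube d, b (ξ - x - kc k) * g x := by
    intro k
    refine setLIntegral_congr_fun measurableSet_cube fun x hx => ?_
    simp only [fract_add_kc hx, sub_sub]
  simp_rw [h1]
  rw [← lintegral_tsum]
  · simp_rw [ENNReal.tsum_mul_right]
    rfl
  · intro k
    exact ((hb.comp ((measurable_const.sub measurable_id).sub_const _)).mul hg).aemeasurable

lemma lintegral_per {b : (Fin d → ℝ) → ℝ≥0∞} (hb : Measurable b) (ξ : Fin d → ℝ) :
    ∫⁻ η in cube d, per b (ξ - η) = ∫⁻ z, b z := by
  have := push hb (g := fun _ => 1) measurable_const ξ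
  simp only [mul_one] at this
  rw [← this, lintegral_sub_left_eq_self]

lemma map_withDensity {b : (Fin d → ℝ) → ℝ≥0∞} (hb : Measurable b) (ξ : Fin d → ℝ) :
    Measure.map fract (volume.withDensity fun η => b (ξ - η)) =
      (volume.restrict (cube d)).withDensity fun η => per b (ξ - η) := by
  ext s hs
  rw [Measure.map_apply measurable_fract' hs, withDensity_apply _ (measurable_fract' hs),
    withDensity_apply _ hs, ← lintegral_indicator (measurable_fract' hs), ← lintegral_indicator hs]
  have := push hb (g := s.indicator 1) (measurable_one.indicator hs) ξ
  convert this using 1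
  · refine lintegral_congr fun η => ?_
    by_cases h : fract η ∈ s <;> simp [h]
  · refine lintegral_congr fun η => ?_
    by_cases h : η ∈ s <;> simp [h]

lemma integral_push {a : (Fin d → ℝ) → ℝ} (ha : Measurable a) (ha0 : ∀ z, 0 ≤ a z)
    (hai : ∫⁻ z, ENNReal.ofReal (a z) ≠ ∞) {h : (Fin d → ℝ) → ℝ} (hh : Measurable h)
    (ξ : Fin d → ℝ) :
    ∫ η, a (ξ - η) * h (fract η) =
      ∫ η in cube d, (per (fun z => ENNReal.ofReal (a z)) (ξ - η)).toReal * h η := by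
  have hb : Measurable fun z => ENNReal.ofReal (a z) := ha.ennreal_ofReal
  have hsub : Measurable fun η : Fin d → ℝ => ξ - η := measurable_const.sub measurable_id
  have h1 : ∫ η, h η ∂(Measure.map fract (volume.withDensity fun η => ENNReal.ofReal (a (ξ - η)))) =
      ∫ η, a (ξ - η) * h (fract η) := by
    rw [integral_map measurable_fract'.aemeasurable hh.aestronglyMeasurable,
      integral_withDensity_eq_integral_toReal_smul (f := fun η => ENNReal.ofReal (a (ξ - η)))
        (hb.comp hsub) (Filter.Eventually.of_forall fun _ => by simp)]
    simp [ENNReal.toReal_ofReal (ha0 _)]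
  rw [← h1, map_withDensity hb, integral_withDensity_eq_integral_toReal_smul
    (f := fun η => per (fun z => ENNReal.ofReal (a z)) (ξ - η)) ((per_measurable hb).comp hsub)]
  · simp
  · refine ae_lt_top ((per_measurable hb).comp hsub) ?_
    rwa [lintegral_per hb]

lemma hk_per {b : (Fin d → ℝ) → ℝ≥0∞} (hb : Measurable b) (hbe : ∀ z, b (-z) = b z)
    {D C : ℝ≥0} (hD : ∫⁻ z, b z ≤ D) {w : (Fin d → ℝ) × (Fin d → ℝ) × ℝ → ℝ} (hw : Measurable w)
    (hwC : ∀ p, ‖w p‖ ≤ C) :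
    HK (volume.restrict (cube d)) (volume.restrict (cube d ×ˢ Set.Ioo (0 : ℝ) 1))
      (fun p => (per b (p.1 - p.2.1)).toReal * w p) (C * D) := by
  have hpm := per_measurable hb
  have hwe : ∀ p, ‖w p‖ₑ ≤ C := by
    intro p
    rw [← enorm_norm, Real.enorm_eq_ofReal (norm_nonneg _)]
    rw [← ENNReal.ofReal_coe_nnreal]
    exact ENNReal.ofReal_le_ofReal (hwC p)
  have hle : ∀ p : (Fin d → ℝ) × (Fin d → ℝ) × ℝ, ‖(per b (p.1 - p.2.1)).toReal * w p‖ₑ ≤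
      C * per b (p.1 - p.2.1) := by
    intro p
    rw [enorm_mul, mul_comm]
    gcongr
    · exact hwe p
    · rw [Real.enorm_eq_ofReal ENNReal.toReal_nonneg]
      exact ENNReal.ofReal_toReal_le
  have hmeas : Measurable fun p : (Fin d → ℝ) × (Fin d → ℝ) × ℝ => per b (p.1 - p.2.1) :=
    hpm.comp (measurable_fst.sub (measurable_fst.comp measurable_snd))
  apply HK.schur
  · exact hmeas.ennreal_toReal.mul hw
  · refine Filter.Eventually.of_forall fun ξ => ?_
    calc _ ≤ ∫⁻ y in cube d ×ˢ Set.Ioo (0 : ℝ) 1, C * per b (ξ - y.1) :=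
          lintegral_mono fun y => hle (ξ, y)
      _ = C * ∫⁻ y in cube d ×ˢ Set.Ioo (0 : ℝ) 1, per b (ξ - y.1) :=
          lintegral_const_mul' _ _ (by simp)
      _ = C * ∫⁻ z, b z := by
          rw [Measure.volume_eq_prod, ← Measure.prod_restrict, lintegral_prod]
          · simp [lintegral_per hb]
          · exact (hmeas.comp measurable_prodMk_left).aemeasurable
      _ ≤ _ := by push_cast; gcongr
  · refine Filter.Eventually.of_forall fun y => ?_
    calc _ ≤ ∫⁻ ξ in cube d, C * per b (ξ - y.1) :=
          lintegral_mono fun ξ => hle (ξ, y)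
      _ = C * ∫⁻ ξ in cube d, per b (ξ - y.1) :=
          lintegral_const_mul' _ _ (by simp)
      _ = C * ∫⁻ ξ in cube d, per b (y.1 - ξ) := by
          congr 1
          refine lintegral_congr fun ξ => ?_
          rw [← per_neg hbe, neg_sub]
      _ = C * ∫⁻ z, b z := by rw [lintegral_per hb]
      _ ≤ _ := by push_cast; gcongr

lemma volume_cube_lt_top : volume (cube d) < ∞ := by
  rw [cube, Real.volume_pi_Ico]
  simp

instance : IsFiniteMeasure (volume.restrict (cube d)) :=
  ⟨by simpa using volume_cube_lt_top⟩

instance : IsFiniteMeasure (volume.restrict (cube d ×ˢ Set.Ioo (0 : ℝ) 1)) := by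
  rw [Measure.volume_eq_prod, ← Measure.prod_restrict]
  infer_instance

lemma ck_per {b : (Fin d → ℝ) → ℝ≥0∞} (hb : Measurable b) (hbe : ∀ z, b (-z) = b z)
    {D C : ℝ≥0} (hD : ∫⁻ z, b z ≤ D) {w : (Fin d → ℝ) × (Fin d → ℝ) × ℝ → ℝ} (hw : Measurable w)
    (hwC : ∀ p, ‖w p‖ ≤ C) :
    CK (volume.restrict (cube d)) (volume.restrict (cube d ×ˢ Set.Ioo (0 : ℝ) 1))
      (fun p => (per b (p.1 - p.2.1)).toReal * w p) := by
  have hpm := per_measurable hb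
  have hsubm : Measurable fun p : (Fin d → ℝ) × (Fin d → ℝ) × ℝ => p.1 - p.2.1 :=
    measurable_fst.sub (measurable_fst.comp measurable_snd)
  have hmeas : Measurable fun p : (Fin d → ℝ) × (Fin d → ℝ) × ℝ => per b (p.1 - p.2.1) :=
    hpm.comp hsubm
  refine CK.limit (hmeas.ennreal_toReal.mul hw) (hk_per hb hbe hD hw hwC) ?_
  intro ε hε
  have hset : ∀ N : ℕ, MeasurableSet {z | per b z ≤ N} := fun N =>
    measurableSet_le hpm measurable_const
  -- the truncated tails
  let c : ℕ → (Fin d → ℝ) → ℝ≥0∞ := fun N => {z | per b z ≤ N}ᶜ.indicator b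
  have hcm : ∀ N, Measurable (c N) := fun N => hb.indicator (hset N).compl
  have hcap : ∀ N z, c N z = if per b z ≤ N then 0 else b z := by
    intro N z
    by_cases h : per b z ≤ N <;> simp [c, h]
  have hce : ∀ N z, c N (-z) = c N z := by
    intro N z
    rw [hcap, hcap, per_neg hbe, hbe]
  have hcper : ∀ N z, per (c N) z = if per b z ≤ N then 0 else per b z := by
    intro N z
    rw [per]
    simp_rw [hcap, per_sub]
    split_ifs
    · simp
    · rfl
  have hfin : ∀ᵐ z, per b z < ∞ := by
    have h0 : ∀ᵐ z ∂(volume.restrict (cube d)), per b z < ∞ := by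
      refine ae_lt_top hpm ?_
      have := lintegral_per hb 0
      simp only [zero_sub, per_neg hbe] at this
      rw [this]
      exact ne_top_of_le_ne_top (by simp) hD
    have hs : MeasurableSet {z | per b z = ∞} := hpm (measurableSet_singleton _)
    have h2 : ∫⁻ z, {z | per b z = ∞}.indicator 1 z = 0 := by
      rw [lintegral_unfold, ENNReal.tsum_eq_zero]
      intro k
      refine lintegral_eq_zero_of_ae_eq_zero ?_
      filter_upwards [h0] with z hz
      have hz' : per b (z + kc k) = per b z := by
        rw [← per_sub b (z + kc k) k, add_sub_cancel_right]
      simp [hz', hz.ne]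
    rw [lintegral_indicator_one hs] at h2
    have h3 : ∀ᵐ z, z ∉ {z | per b z = ∞} := measure_eq_zero_iff_ae_notMem.1 h2
    filter_upwards [h3] with z hz
    exact lt_top_iff_ne_top.2 hz
  have htend : Filter.Tendsto (fun N => ∫⁻ z, c N z) Filter.atTop (nhds 0) := by
    have := tendsto_lintegral_of_dominated_convergence (F := c) (f := fun _ => 0) (μ := volume) b hcm
      (fun N => Filter.Eventually.of_forall fun z => by rw [hcap]; split_ifs <;> simp)
      (ne_top_of_le_ne_top (by simp) hD) ?_
    · simpa using this
    · filter_upwards [hfin] with z hz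
      obtain ⟨n, hn⟩ := ENNReal.exists_nat_gt hz.ne
      refine tendsto_const_nhds.congr' ?_
      filter_upwards [Filter.eventually_ge_atTop n] with N hN
      rw [hcap, if_pos]
      exact hn.le.trans (by exact_mod_cast hN)
  have hpos : (0 : ℝ≥0∞) < ((ε / (C + 1) : ℝ≥0) : ℝ≥0∞) := by
    rw [ENNReal.coe_pos]; positivity
  obtain ⟨N, hN⟩ := (htend.eventually_lt_const hpos).exists
  refine ⟨fun p => ({z | per b z ≤ N}.indicator (fun z => (per b z).toReal) (p.1 - p.2.1)) * w p,
    ?_, ?_⟩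
  · refine CK.of_bounded (M := N * C) ?_ ?_
    · exact ((hpm.ennreal_toReal.indicator (hset N)).comp hsubm).mul hw
    · intro p
      rw [norm_mul]
      refine mul_le_mul ?_ (hwC p) (norm_nonneg _) (by positivity)
      by_cases h : per b (p.1 - p.2.1) ≤ N
      · rw [Set.indicator_of_mem (by exact h), Real.norm_of_nonneg ENNReal.toReal_nonneg]
        exact ENNReal.toReal_le_of_le_ofReal (by positivity) (by simpa using h)
      · rw [Set.indicator_of_notMem (by exact h)]
        simp
  · have := hk_per (hcm N) (hce N) hN.le hw (C := C + 1) (fun p => (hwC p).trans (by simp))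
    rw [mul_div_cancel₀ _ (by positivity)] at this
    convert this using 2 with p
    beta_reduce
    rw [hcper]
    by_cases h : per b (p.1 - p.2.1) ≤ N
    · rw [Set.indicator_of_mem (by exact h)]; simp [h]
    · rw [Set.indicator_of_notMem (by exact h)]; simp [h]

lemma integral_cube_Ioo {f : (Fin d → ℝ) × ℝ → ℝ}
    (h : Integrable f (volume.restrict (cube d ×ˢ Set.Ioo (0 : ℝ) 1))) :
    ∫ y in cube d ×ˢ Set.Ioo (0 : ℝ) 1, f y =
      ∫ s in Set.Ioo (0 : ℝ) 1, ∫ η in cube d, f (η, s) := by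
  rw [Measure.volume_eq_prod, ← Measure.prod_restrict] at h ⊢
  exact integral_prod_symm _ h

end concrete

/-- The integral operator
`(KΨ)(ξ) = ∫₀¹∫_{ℝ^d} a(ξ-η) μ(ξ,η,s) exp(∫₀^s (G(ξ,τ)-G(η,τ)) dτ) Ψ(η,s) dη ds`
is a compact operator from `L²(𝕋^{d+1})` to `L²(𝕋^d)` of norm at most `μ⁺ e^{μ⁺}`. -/
theorem stmt12 {d : ℕ} (hd : 1 ≤ d)
    (a : (Fin d → ℝ) → ℝ) (μ : (Fin d → ℝ) → (Fin d → ℝ) → ℝ → ℝ) (μm μp : ℝ)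
    (hameas : Measurable a) (hanonneg : ∀ z, 0 ≤ a z)
    (haint : Integrable a) (hamass : ∫ z, a z = 1)
    (hamom : Integrable (fun z => ‖z‖ ^ 2 * a z))
    (hasymm : ∀ z, a (-z) = a z)
    (hμmeas : Measurable fun p : (Fin d → ℝ) × (Fin d → ℝ) × ℝ => μ p.1 p.2.1 p.2.2)
    (hμper₁ : ∀ ξ η s, ∀ k : Fin d → ℤ, μ (ξ + fun i => (k i : ℝ)) η s = μ ξ η s)
    (hμper₂ : ∀ ξ η s, ∀ k : Fin d → ℤ, μ ξ (η + fun i => (k i : ℝ)) s = μ ξ η s)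
    (hμper₃ : ∀ ξ η s, μ ξ η (s + 1) = μ ξ η s)
    (hμsymm : ∀ ξ η s, μ ξ η s = μ η ξ s)
    (hμm : 0 < μm) (hμlb : ∀ ξ η s, μm ≤ μ ξ η s) (hμub : ∀ ξ η s, μ ξ η s ≤ μp) :
    ∃ K : Lp ℝ 2 (volume.restrict (cube d ×ˢ Set.Ioo (0 : ℝ) 1)) →L[ℝ]
        Lp ℝ 2 (volume.restrict (cube d)),
      IsCompactOperator ⇑K ∧
      ‖K‖ ≤ μp * Real.exp μp ∧
      ∀ Ψ : Lp ℝ 2 (volume.restrict (cube d ×ˢ Set.Ioo (0 : ℝ) 1)),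
        ⇑(K Ψ) =ᵐ[volume.restrict (cube d)]
          fun ξ => ∫ s in Set.Ioo (0 : ℝ) 1, ∫ η,
            a (ξ - η) * μ ξ η s *
              Real.exp (∫ τ in (0 : ℝ)..s, (Gfun a μ ξ τ - Gfun a μ η τ)) *
              Ψ (fract η, s) := by
  classical
  have hμp0 : 0 ≤ μp := hμm.le.trans ((hμlb 0 0 0).trans (hμub 0 0 0))
  -- facts on G
  have hG0 : ∀ ξ s, 0 ≤ Gfun a μ ξ s := fun ξ s =>
    integral_nonneg fun η => mul_nonneg (hanonneg _) (hμm.le.trans (hμlb _ _ _))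
  have hG1 : ∀ ξ s, Gfun a μ ξ s ≤ μp := by
    intro ξ s
    have h1 : ∫ η, a (ξ - η) * μp = μp := by
      rw [integral_mul_const, integral_sub_left_eq_self (fun z => a z), hamass, one_mul]
    rw [← h1]
    refine integral_mono_of_nonneg (Filter.Eventually.of_forall fun η =>
      mul_nonneg (hanonneg _) (hμm.le.trans (hμlb _ _ _))) ?_
      (Filter.Eventually.of_forall fun η => mul_le_mul_of_nonneg_left (hμub _ _ _) (hanonneg _))
    exact (haint.comp_sub_left ξ).mul_const μp
  have hGper : ∀ ξ s (k : Fin d → ℤ), Gfun a μ (ξ + kc k) s = Gfun a μ ξ s := by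
    intro ξ s k
    unfold Gfun
    rw [← integral_add_right_eq_self (fun η => a (ξ + kc k - η) * μ (ξ + kc k) η s) (kc k)]
    refine integral_congr_ae (Filter.Eventually.of_forall fun η => ?_)
    have e : ξ + kc k - (η + kc k) = ξ - η := by abel
    simp only [e]
    rw [show μ (ξ + kc k) (η + kc k) s = μ ξ η s from
      (hμper₁ ξ _ s k).trans (hμper₂ ξ η s k)]
  have hGmeas : Measurable fun p : (Fin d → ℝ) × ℝ => Gfun a μ p.1 p.2 := by
    have : StronglyMeasurable fun q : ((Fin d → ℝ) × ℝ) × (Fin d → ℝ) =>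
        a (q.1.1 - q.2) * μ q.1.1 q.2 q.1.2 := by
      apply Measurable.stronglyMeasurable
      refine (hameas.comp (by fun_prop)).mul ?_
      exact hμmeas.comp (f := fun q : ((Fin d → ℝ) × ℝ) × (Fin d → ℝ) => (q.1.1, q.2, q.1.2))
        (by fun_prop)
    exact (StronglyMeasurable.integral_prod_right' this).measurable
  -- the exponent
  let E : (Fin d → ℝ) × (Fin d → ℝ) × ℝ → ℝ := fun p =>
    ∫ τ in (0 : ℝ)..p.2.2, (Gfun a μ p.1 τ - Gfun a μ p.2.1 τ)
  have hEmeas : Measurable E := by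
    have hset : ∀ f g : ((Fin d → ℝ) × (Fin d → ℝ) × ℝ) → ℝ, Measurable f → Measurable g →
        Measurable fun p => ∫ τ in Set.Ioc (f p) (g p),
          (Gfun a μ p.1 τ - Gfun a μ p.2.1 τ) := by
      intro f g hf hg
      simp_rw [← integral_indicator measurableSet_Ioc]
      have : StronglyMeasurable fun q : ((Fin d → ℝ) × (Fin d → ℝ) × ℝ) × ℝ =>
          (Set.Ioc (f q.1) (g q.1)).indicator
            (fun τ => Gfun a μ q.1.1 τ - Gfun a μ q.1.2.1 τ) q.2 := by
        apply Measurable.stronglyMeasurable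
        have hs : MeasurableSet {q : ((Fin d → ℝ) × (Fin d → ℝ) × ℝ) × ℝ |
            f q.1 < q.2 ∧ q.2 ≤ g q.1} :=
          (measurableSet_lt (hf.comp measurable_fst) measurable_snd).inter
            (measurableSet_le measurable_snd (hg.comp measurable_fst))
        have hm : Measurable fun q : ((Fin d → ℝ) × (Fin d → ℝ) × ℝ) × ℝ =>
            Gfun a μ q.1.1 q.2 - Gfun a μ q.1.2.1 q.2 :=
          (hGmeas.comp (f := fun q : ((Fin d → ℝ) × (Fin d → ℝ) × ℝ) × ℝ => (q.1.1, q.2))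
            (by fun_prop)).sub
          (hGmeas.comp (f := fun q : ((Fin d → ℝ) × (Fin d → ℝ) × ℝ) × ℝ => (q.1.2.1, q.2))
            (by fun_prop))
        convert hm.indicator hs using 2 with q
        simp only [Set.indicator_apply, Set.mem_Ioc, Set.mem_ofPred_eq]
      exact (StronglyMeasurable.integral_prod_right' this).measurable
    exact (hset _ _ measurable_const (measurable_snd.comp measurable_snd)).sub
      (hset _ _ (measurable_snd.comp measurable_snd) measurable_const)
  have hEb : ∀ ξ η s, s ∈ Set.Ioo (0 : ℝ) 1 → E (ξ, η, s) ≤ μp := by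
    intro ξ η s hs
    have h1 : ‖E (ξ, η, s)‖ ≤ μp * |s - 0| :=
      intervalIntegral.norm_integral_le_of_norm_le_const fun τ _ => by
        rw [Real.norm_eq_abs, abs_le]
        have := hG0 ξ τ; have := hG0 η τ; have := hG1 ξ τ; have := hG1 η τ
        constructor <;> linarith
    rw [sub_zero, abs_of_pos hs.1] at h1
    have h2 : μp * s ≤ μp * 1 := mul_le_mul_of_nonneg_left hs.2.le hμp0
    have h3 := Real.le_norm_self (E (ξ, η, s))
    linarith
  -- the bounded weight
  let S : Set ((Fin d → ℝ) × (Fin d → ℝ) × ℝ) := {p | p.2.2 ∈ Set.Ioo (0 : ℝ) 1}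
  have hS : MeasurableSet S := (measurable_snd.comp measurable_snd) measurableSet_Ioo
  let w : (Fin d → ℝ) × (Fin d → ℝ) × ℝ → ℝ :=
    S.indicator fun p => μ p.1 p.2.1 p.2.2 * Real.exp (E p)
  have hw : Measurable w := (hμmeas.mul hEmeas.exp).indicator hS
  let C : NNReal := Real.toNNReal (μp * Real.exp μp)
  have hCc : (C : ℝ) = μp * Real.exp μp := Real.coe_toNNReal _ (by positivity)
  have hwC : ∀ p, ‖w p‖ ≤ C := by
    intro p
    rw [hCc]
    by_cases hp : p ∈ S
    · have hμ0 : 0 ≤ μ p.1 p.2.1 p.2.2 := hμm.le.trans (hμlb _ _ _)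
      rw [show w p = _ from Set.indicator_of_mem hp _,
        Real.norm_of_nonneg (by positivity)]
      have := hEb p.1 p.2.1 p.2.2 hp
      exact mul_le_mul (hμub _ _ _) (Real.exp_le_exp.2 this) (by positivity) hμp0
    · rw [show w p = 0 from Set.indicator_of_notMem hp _, norm_zero]
      positivity
  have hwper : ∀ ξ η s, w (ξ, fract η, s) = w (ξ, η, s) := by
    intro ξ η s
    have h1 : μ ξ (fract η) s = μ ξ η s := by
      rw [fract_eq]; exact hμper₂ ξ η s _
    have h2 : E (ξ, fract η, s) = E (ξ, η, s) := by
      simp only [E]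
      rw [fract_eq]
      simp_rw [hGper]
    simp only [w, S, Set.indicator_apply, Set.mem_ofPred_eq, h1, h2]
  -- the periodised density
  have hb : Measurable fun z => ENNReal.ofReal (a z) := hameas.ennreal_ofReal
  have hbe : ∀ z, ENNReal.ofReal (a (-z)) = ENNReal.ofReal (a z) := fun z => by rw [hasymm]
  have hmassE : ∫⁻ z, ENNReal.ofReal (a z) = 1 := by
    rw [← ofReal_integral_eq_lintegral_ofReal haint (Filter.Eventually.of_forall hanonneg), hamass,
      ENNReal.ofReal_one]
  have hD : ∫⁻ z, ENNReal.ofReal (a z) ≤ ((1 : NNReal) : ENNReal) := by rw [hmassE]; simp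
  have hHK := hk_per hb hbe hD hw hwC
  obtain ⟨hkm, -, T, hT, hcomp⟩ := ck_per hb hbe hD hw hwC
  obtain ⟨T', hn, hT'⟩ := hHK.exists_op hkm
  have hTT : T = T' := hT.unique hT'
  refine ⟨T, hcomp, ?_, ?_⟩
  · rw [hTT]
    refine hn.trans ?_
    rw [mul_one, hCc]
  · intro Ψ
    have hΨ : Measurable Ψ := (Lp.stronglyMeasurable Ψ).measurable
    filter_upwards [hT Ψ, hHK.integrable hkm Ψ] with ξ h1 h2
    rw [h1]
    rw [integral_cube_Ioo h2]
    refine setIntegral_congr_fun measurableSet_Ioo fun s hs => ?_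
    have h3 := integral_push hameas hanonneg (by rw [hmassE]; simp)
      (h := fun η => w (ξ, η, s) * Ψ (η, s))
      ((hw.comp (f := fun η => (ξ, η, s)) (by fun_prop)).mul
        (hΨ.comp (f := fun η => (η, s)) (by fun_prop))) ξ
    simp only [mul_assoc]
    simp only [hwper] at h3
    refine h3.symm.trans ?_
    refine integral_congr_ae (Filter.Eventually.of_forall fun η => ?_)
    have hm : (ξ, η, s) ∈ S := hs
    simp only [w, Set.indicator_of_mem hm, mul_assoc, E]
end
end
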